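/- arXiv:1107.0871 — 8 statements merged into one kernel-verified Lean document; each statement's English description precedes it below -/
import Mathlib

section
/- For every proper k-colouring σ of G and every colour q ≠ σ(v), the q-switching H(σ,q) is again a proper k-colouring of G. -/
/-- The disagreement graph `Q_{σ(v),q}`: the set of vertices `x` for which there is a
path `v = w₀, …, w_t = x` in `G` all of whose vertices receive colour `σ v` or `q`. -/
def disagreeSet {V : Type*} {k : ℕ} (G : SimpleGraph V) (v : V)
    (σ : V → Fin k) (q : Fin k) : Set V :=
  {x | ∃ p : G.Walk v x, ∀ w ∈ p.support, σ w = σ v ∨ σ w = q}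

open Classical in
/-- The `q`-switching `H(σ,q)`: exchange the colours `σ v` and `q` on the disagreement
graph, leaving all other vertices unchanged. -/
noncomputable def switchColour {V : Type*} {k : ℕ} (G : SimpleGraph V) (v : V)
    (σ : V → Fin k) (q : Fin k) : V → Fin k := fun x =>
  if x ∈ disagreeSet G v σ q then
    if σ x = σ v then q else if σ x = q then σ v else σ x
  else σ x

theorem disagree_extend {V : Type*} {k : ℕ} (G : SimpleGraph V) (v : V)
    (σ : V → Fin k) (q : Fin k) (x y : V) (h : G.Adj x y)
    (hx : x ∈ disagreeSet G v σ q) (hy : σ y = σ v ∨ σ y = q) :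
    y ∈ disagreeSet G v σ q := by
  obtain ⟨p, hp⟩ := hx
  refine ⟨p.concat h, fun w hw => ?_⟩
  rw [SimpleGraph.Walk.support_concat] at hw
  simp only [List.concat_eq_append, List.mem_append, List.mem_singleton] at hw
  rcases hw with hw | rfl
  · exact hp w hw
  · exact hy

theorem disagree_colour {V : Type*} {k : ℕ} (G : SimpleGraph V) (v : V)
    (σ : V → Fin k) (q : Fin k) (x : V)
    (hx : x ∈ disagreeSet G v σ q) : σ x = σ v ∨ σ x = q := by
  obtain ⟨p, hp⟩ := hx
  exact hp x p.end_mem_support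

/-- for every proper `k`-colouring `σ` of `G` and every colour `q ≠ σ v`,
the `q`-switching `H(σ,q)` is again a proper `k`-colouring of `G`. -/
theorem stmt0 {V : Type*} [Fintype V] {k : ℕ} (hk : 0 < k)
    (G : SimpleGraph V) (v : V) (σ : V → Fin k)
    (hσ : ∀ x y, G.Adj x y → σ x ≠ σ y) (q : Fin k) (hq : q ≠ σ v) :
    ∀ x y, G.Adj x y → switchColour G v σ q x ≠ switchColour G v σ q y := by
  intro x y h
  have h1 := hσ x y h
  have h2 := disagree_extend G v σ q x y h
  have h3 := disagree_extend G v σ q y x h.symm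
  have h4 := disagree_colour G v σ q x
  have h5 := disagree_colour G v σ q y
  unfold switchColour
  split_ifs <;> grind
end

section
/- For any two distinct colours c, q ∈ Fin k, the map σ ↦ H(σ,q) is a bijection from {σ ∈ Ω : σ(v) = c} onto {σ ∈ Ω : σ(v) = q}, and its inverse is the map σ ↦ H(σ,c). -/
theorem mem_v_aux {V : Type*} {k : ℕ} (G : SimpleGraph V) (v : V)
    (σ : V → Fin k) (q : Fin k) : v ∈ disagreeSet G v σ q :=
  ⟨SimpleGraph.Walk.nil, by simp⟩

theorem mem_col_aux {V : Type*} {k : ℕ} (G : SimpleGraph V) (v : V)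
    (σ : V → Fin k) (q : Fin k) {x : V} (h : x ∈ disagreeSet G v σ q) :
    σ x = σ v ∨ σ x = q := by
  obtain ⟨p, hp⟩ := h
  exact hp x p.end_mem_support

theorem mem_step_aux {V : Type*} {k : ℕ} (G : SimpleGraph V) (v : V)
    (σ : V → Fin k) (q : Fin k) {x y : V} (h : x ∈ disagreeSet G v σ q)
    (ha : G.Adj x y) (hy : σ y = σ v ∨ σ y = q) : y ∈ disagreeSet G v σ q := by
  obtain ⟨p, hp⟩ := h
  refine ⟨p.concat ha, fun w hw => ?_⟩
  rw [SimpleGraph.Walk.support_concat] at hw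
  simp only [List.concat_eq_append, List.mem_append, List.mem_singleton] at hw
  rcases hw with hw | rfl
  · exact hp w hw
  · exact hy

theorem switch_v_aux {V : Type*} {k : ℕ} (G : SimpleGraph V) (v : V)
    (σ : V → Fin k) (q : Fin k) : switchColour G v σ q v = q := by
  simp [switchColour, mem_v_aux]

theorem switch_iff_aux {V : Type*} {k : ℕ} (G : SimpleGraph V) (v : V)
    (σ : V → Fin k) (q : Fin k) (x : V) :
    (switchColour G v σ q x = q ∨ switchColour G v σ q x = σ v) ↔
      (σ x = σ v ∨ σ x = q) := by
  unfold switchColour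
  grind

theorem switch_set_aux {V : Type*} {k : ℕ} (G : SimpleGraph V) (v : V)
    (σ : V → Fin k) (q : Fin k) :
    disagreeSet G v (switchColour G v σ q) (σ v) = disagreeSet G v σ q := by
  ext x
  simp only [disagreeSet, Set.mem_setOf_eq, switch_v_aux, switch_iff_aux]

theorem switch_switch_aux {V : Type*} {k : ℕ} (G : SimpleGraph V) (v : V)
    (σ : V → Fin k) (q : Fin k) :
    switchColour G v (switchColour G v σ q) (σ v) = σ := by
  funext x
  have h1 := switch_set_aux G v σ q
  have h2 := switch_v_aux G v σ q
  have h3 := @mem_col_aux V k G v σ q x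
  rw [switchColour, h1, h2]
  unfold switchColour
  grind

theorem switch_proper_aux {V : Type*} {k : ℕ} (G : SimpleGraph V) (v : V)
    (σ : V → Fin k) (q : Fin k) (hσ : ∀ x y, G.Adj x y → σ x ≠ σ y) :
    ∀ x y, G.Adj x y → switchColour G v σ q x ≠ switchColour G v σ q y := by
  intro x y ha
  have h0 := hσ x y ha
  have h1 := @mem_step_aux V k G v σ q x y
  have h2 := @mem_step_aux V k G v σ q y x
  have h3 := @mem_col_aux V k G v σ q x
  have h4 := @mem_col_aux V k G v σ q y
  have ha' := ha.symm
  unfold switchColour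
  grind

/-- for distinct colours `c q`, the map `σ ↦ H(σ,q)` is a bijection from
the proper `k`-colourings with `σ v = c` onto those with `σ v = q`, with inverse
`σ ↦ H(σ,c)`. -/
theorem stmt1 {V : Type*} [Fintype V] {k : ℕ} (hk : 0 < k)
    (G : SimpleGraph V) (v : V) (c q : Fin k) (hcq : c ≠ q) :
    Set.BijOn (fun σ => switchColour G v σ q)
      {σ : V → Fin k | (∀ x y, G.Adj x y → σ x ≠ σ y) ∧ σ v = c}
      {σ : V → Fin k | (∀ x y, G.Adj x y → σ x ≠ σ y) ∧ σ v = q} ∧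
    Set.InvOn (fun σ => switchColour G v σ c) (fun σ => switchColour G v σ q)
      {σ : V → Fin k | (∀ x y, G.Adj x y → σ x ≠ σ y) ∧ σ v = c}
      {σ : V → Fin k | (∀ x y, G.Adj x y → σ x ≠ σ y) ∧ σ v = q} := by
  have hinv : Set.InvOn (fun σ => switchColour G v σ c) (fun σ => switchColour G v σ q)
      {σ : V → Fin k | (∀ x y, G.Adj x y → σ x ≠ σ y) ∧ σ v = c}
      {σ : V → Fin k | (∀ x y, G.Adj x y → σ x ≠ σ y) ∧ σ v = q} := by
    constructor
    · rintro σ ⟨_, rfl⟩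
      exact switch_switch_aux G v σ q
    · rintro σ ⟨_, rfl⟩
      exact switch_switch_aux G v σ c
  refine ⟨hinv.bijOn ?_ ?_, hinv⟩
  · rintro σ ⟨h, _⟩
    exact ⟨switch_proper_aux G v σ q h, switch_v_aux G v σ q⟩
  · rintro σ ⟨h, _⟩
    exact ⟨switch_proper_aux G v σ c h, switch_v_aux G v σ c⟩
end

section
/- If z is uniformly distributed on Ω₁ and ν' denotes the distribution of H(z) (as a distribution on S), and ν denotes the uniform distribution on Ω₂ (as a distribution on S), then ‖ν − ν'‖ ≤ α. -/
theorem aux_sum {S : Type*} [Fintype S] [DecidableEq S] (Ω : Finset S) (hne : Ω.Nonempty) (H : S → S)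
    (A : Finset S) :
    (∑ a ∈ A, ((PMF.map H (PMF.uniformOfFinset Ω hne)) a).toReal)
      = ((Ω.filter (fun z => H z ∈ A)).card : ℝ) / (Ω.card : ℝ) := by
  have h1 : ∀ a, ((PMF.map H (PMF.uniformOfFinset Ω hne)) a).toReal
      = ∑ z : S, if a = H z then (if z ∈ Ω then (Ω.card : ℝ)⁻¹ else 0) else 0 := by
    intro a
    classical
    rw [PMF.map_apply, tsum_fintype, ENNReal.toReal_sum]
    · refine Finset.sum_congr rfl fun z _ => ?_
      rw [PMF.uniformOfFinset_apply]
      split_ifs <;> simp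
    · intro z _
      split_ifs
      · exact PMF.apply_ne_top _ _
      · simp
  simp_rw [h1]
  rw [Finset.sum_comm]
  simp_rw [Finset.sum_ite_eq']
  rw [Finset.card_filter, Nat.cast_sum, Finset.sum_div,
    ← Finset.sum_subset (Finset.subset_univ Ω)]
  · refine Finset.sum_congr rfl fun z hz => ?_
    by_cases h : H z ∈ A <;> simp [h, hz]
  · intro z _ hz
    simp [hz]

theorem aux_real (k m n p α : ℝ) (hn : 0 < n) (hp : 0 < p)
    (hkm : k ≤ m) (hk : 0 ≤ k) (h1 : (1 - α) * n ≤ m) (h2 : (1 - α) * p ≤ m)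
    (x y : ℝ) (hx : x ≤ k + (n - m)) (hy : k ≤ y) : x / n - y / p ≤ α := by
  have e1 : x / n ≤ (k + (n - m)) / n := by gcongr
  have e2 : k / p ≤ y / p := by gcongr
  have f1 : 1 - α ≤ m / n := by rwa [le_div_iff₀ hn]
  have f2 : 1 - α ≤ m / p := by rwa [le_div_iff₀ hp]
  have e3 : (k + (n - m)) / n = 1 - (m - k) / n := by field_simp; ring
  have g : 1 - α ≤ (m - k) / n + k / p := by
    rcases le_total n p with h | h
    · have : (m - k) / p ≤ (m - k) / n := by
        apply div_le_div_of_nonneg_left (by linarith) hn h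
      have e : m / p = (m - k) / p + k / p := by ring
      linarith
    · have : k / n ≤ k / p := div_le_div_of_nonneg_left hk hp h
      have e : m / n = (m - k) / n + k / n := by ring
      linarith
  linarith

theorem aux_card {S : Type*} (Ω Ω' : Finset S) (h : Ω' ⊆ Ω) (P : S → Prop)
    [DecidablePred P] :
    ((Ω'.filter P).card : ℝ) ≤ (Ω.filter P).card ∧
    ((Ω.filter P).card : ℝ) ≤ (Ω'.filter P).card + ((Ω.card : ℝ) - Ω'.card) := by
  constructor
  · exact_mod_cast Finset.card_le_card (Finset.filter_subset_filter _ h)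
  · have a := Finset.card_filter_add_card_filter_not (s := Ω) P
    have b := Finset.card_filter_add_card_filter_not (s := Ω') P
    have c := Finset.card_le_card (Finset.filter_subset_filter (fun x => ¬ P x) h)
    have : (Ω.filter P).card + Ω'.card ≤ (Ω'.filter P).card + Ω.card := by omega
    have : ((Ω.filter P).card : ℝ) + Ω'.card ≤ (Ω'.filter P).card + Ω.card := by
      exact_mod_cast this
    linarith

/-- if `Ω'₁ ⊆ Ω₁` and `Ω'₂ ⊆ Ω₂` satisfy `|Ω'ᵢ| ≥ (1−α)|Ωᵢ|` and
`H` restricts to a bijection from `Ω'₁` onto `Ω'₂`, then the distribution `ν'` of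
`H(z)` for `z` uniform on `Ω₁` is within total variation distance `α` of the uniform
distribution `ν` on `Ω₂`: for every event `A ⊆ S`, `|ν(A) − ν'(A)| ≤ α`. -/
theorem stmt4 {S : Type*} [Fintype S]
    (Ω₁ Ω₂ Ω₁' Ω₂' : Finset S) (hsub₁ : Ω₁' ⊆ Ω₁) (hsub₂ : Ω₂' ⊆ Ω₂)
    (hne₁ : Ω₁.Nonempty) (hne₂ : Ω₂.Nonempty)
    (α : ℝ) (hα₀ : 0 ≤ α) (hα₁ : α ≤ 1)
    (hcard₁ : (1 - α) * (Ω₁.card : ℝ) ≤ (Ω₁'.card : ℝ))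
    (hcard₂ : (1 - α) * (Ω₂.card : ℝ) ≤ (Ω₂'.card : ℝ))
    (H : S → S) (hH : Set.BijOn H (↑Ω₁' : Set S) (↑Ω₂' : Set S)) :
    ∀ A : Finset S,
      |(∑ a ∈ A, ((PMF.uniformOfFinset Ω₂ hne₂) a).toReal) -
        (∑ a ∈ A, ((PMF.map H (PMF.uniformOfFinset Ω₁ hne₁)) a).toReal)| ≤ α := by
  classical
  intro A
  have hν := aux_sum Ω₂ hne₂ id A
  rw [PMF.map_id] at hν
  rw [hν, aux_sum Ω₁ hne₁ H A]
  have hm : Ω₁'.card = Ω₂'.card :=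
    Finset.card_bij (fun a _ => H a) (fun a ha => hH.mapsTo ha)
      (fun a ha b hb e => hH.injOn ha hb e)
      (fun b hb => by
        obtain ⟨a, ha, e⟩ := hH.surjOn hb
        exact ⟨a, ha, e⟩)
  have hk : (Ω₁'.filter (fun z => H z ∈ A)).card = (Ω₂'.filter (fun z => id z ∈ A)).card := by
    refine Finset.card_bij (fun a _ => H a) ?_ ?_ ?_
    · intro a ha
      rw [Finset.mem_filter] at ha ⊢
      exact ⟨hH.mapsTo ha.1, ha.2⟩
    · intro a ha b hb e
      rw [Finset.mem_filter] at ha hb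
      exact hH.injOn ha.1 hb.1 e
    · intro b hb
      rw [Finset.mem_filter] at hb
      obtain ⟨a, ha, e⟩ := hH.surjOn hb.1
      refine ⟨a, ?_, e⟩
      rw [Finset.mem_filter, e]
      exact ⟨ha, hb.2⟩
  have c1 := aux_card Ω₁ Ω₁' hsub₁ (fun z => H z ∈ A)
  have c2 := aux_card Ω₂ Ω₂' hsub₂ (fun z => id z ∈ A)
  have p1 : (0 : ℝ) < Ω₁.card := by exact_mod_cast hne₁.card_pos
  have p2 : (0 : ℝ) < Ω₂.card := by exact_mod_cast hne₂.card_pos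
  have hkm : ((Ω₂'.filter (fun z => id z ∈ A)).card : ℝ) ≤ Ω₂'.card := by
    exact_mod_cast Finset.card_filter_le _ _
  rw [hk, hm] at c1
  rw [hm] at hcard₁
  have r1 := aux_real _ _ _ _ α p2 p1 hkm (Nat.cast_nonneg _) hcard₂ hcard₁ _ _ c2.2 c1.1
  have r2 := aux_real _ _ _ _ α p1 p2 hkm (Nat.cast_nonneg _) hcard₁ hcard₂ _ _ c1.2 c2.1
  rw [abs_le]
  constructor <;> linarith
end

section
/- Suppose k ≥ 2, Ω is nonempty, the set of good k-colourings of G is nonempty, and α ∈ [0,1] is such that for all distinct colours c, q ∈ Fin k: |{σ ∈ Ω(c,c) : u ∈ Q_{c,q}}| ≤ α·|Ω(c,c)| and |{σ ∈ Ω(q,c) : u ∈ Q_{q,c}}| ≤ α·|Ω(q,c)|. Let ν be the uniform distribution over the good k-colourings of G, and let ν' be the distribution of the output of STEP when its input is chosen uniformly at random from Ω. Then ‖ν − ν'‖ ≤ α. -/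
/-- The set of proper `k`-colourings of `G`, as a finset. -/
noncomputable def colourings {V : Type*} [Fintype V] (G : SimpleGraph V) (k : ℕ) :
    Finset (V → Fin k) :=
  (Set.toFinite {σ : V → Fin k | ∀ x y, G.Adj x y → σ x ≠ σ y}).toFinset

/-- The set of good proper `k`-colourings of `G` (those with `σ v ≠ σ u`), as a finset. -/
noncomputable def goodColourings {V : Type*} [Fintype V] (G : SimpleGraph V) (k : ℕ)
    (v u : V) : Finset (V → Fin k) :=
  (Set.toFinite {σ : V → Fin k |
    (∀ x y, G.Adj x y → σ x ≠ σ y) ∧ σ v ≠ σ u}).toFinset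

/-- The randomized procedure STEP: on a good colouring output it unchanged; on a bad
colouring pick `q` uniformly at random from `Fin k \ {σ v}` and output `H(σ,q)`. -/
noncomputable def stepPMF {V : Type*} {k : ℕ} (hk : 2 ≤ k) (G : SimpleGraph V)
    (v u : V) (σ : V → Fin k) : PMF (V → Fin k) :=
  if σ v = σ u then
    PMF.map (fun q => switchColour G v σ q)
      (PMF.uniformOfFinset (Finset.univ.erase (σ v))
        (by
          rw [← Finset.card_pos, Finset.card_erase_of_mem (Finset.mem_univ _),
            Finset.card_univ, Fintype.card_fin]
          omega))
  else PMF.pure σ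

section Helpers
variable {V : Type*} {k : ℕ} {G : SimpleGraph V} {v u : V}

lemma aux_self_mem (σ : V → Fin k) (q : Fin k) : v ∈ disagreeSet G v σ q :=
  ⟨SimpleGraph.Walk.nil, by simp⟩

lemma aux_col_of_mem {σ : V → Fin k} {q : Fin k} {x : V} (h : x ∈ disagreeSet G v σ q) :
    σ x = σ v ∨ σ x = q := by
  obtain ⟨p, hp⟩ := h
  exact hp x p.end_mem_support

lemma aux_mem_of_adj {σ : V → Fin k} {q : Fin k} {x y : V} (h : x ∈ disagreeSet G v σ q)
    (hxy : G.Adj x y) (hy : σ y = σ v ∨ σ y = q) : y ∈ disagreeSet G v σ q := by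
  obtain ⟨p, hp⟩ := h
  refine ⟨p.concat hxy, fun w hw => ?_⟩
  rw [SimpleGraph.Walk.support_concat] at hw
  simp at hw
  rcases hw with hw | rfl
  · exact hp w hw
  · exact hy

lemma aux_switch_v (σ : V → Fin k) (q : Fin k) : switchColour G v σ q v = q := by
  simp [switchColour, aux_self_mem]

lemma aux_switch_notMem {σ : V → Fin k} {q : Fin k} {x : V} (h : x ∉ disagreeSet G v σ q) :
    switchColour G v σ q x = σ x := by
  simp [switchColour, h]

lemma aux_switch_col (σ : V → Fin k) (q : Fin k) (w : V) :
    (switchColour G v σ q w = q ∨ switchColour G v σ q w = σ v) ↔ (σ w = σ v ∨ σ w = q) := by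
  unfold switchColour
  split_ifs <;> grind

lemma aux_switch_set (σ : V → Fin k) (q : Fin k) :
    disagreeSet G v (switchColour G v σ q) (σ v) = disagreeSet G v σ q := by
  ext x
  simp only [disagreeSet, Set.mem_ofPred_eq, aux_switch_v, aux_switch_col]

lemma aux_switch_switch (σ : V → Fin k) (q : Fin k) :
    switchColour G v (switchColour G v σ q) (σ v) = σ := by
  funext x
  by_cases hx : x ∈ disagreeSet G v σ q
  · have hc := aux_col_of_mem hx
    have h1 : switchColour G v σ q x = if σ x = σ v then q else σ v := by
      simp only [switchColour, hx, if_true]; grind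
    have h2 : x ∈ disagreeSet G v (switchColour G v σ q) (σ v) := by rwa [aux_switch_set]
    rw [switchColour, if_pos h2, aux_switch_v, h1]
    grind
  · rw [aux_switch_notMem (by rwa [aux_switch_set]), aux_switch_notMem hx]

lemma aux_switch_proper {σ : V → Fin k} (hσ : ∀ x y, G.Adj x y → σ x ≠ σ y) (q : Fin k) :
    ∀ x y, G.Adj x y → switchColour G v σ q x ≠ switchColour G v σ q y := by
  intro x y hxy
  have h := hσ x y hxy
  have h1 := fun hx hy => aux_mem_of_adj (v := v) (σ := σ) (q := q) hx hxy hy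
  have h2 := fun hx hy => aux_mem_of_adj (v := v) (σ := σ) (q := q) hx hxy.symm hy
  have h3 := aux_col_of_mem (G := G) (v := v) (σ := σ) (q := q) (x := x)
  have h4 := aux_col_of_mem (G := G) (v := v) (σ := σ) (q := q) (x := y)
  unfold switchColour
  split_ifs <;> grind

/-- A switching of a bad colouring that is still bad has `u` in the disagreement graph. -/
lemma aux_bad_bad {σ : V → Fin k} {q : Fin k} (hb : σ v = σ u) (hq : q ≠ σ v)
    (h : switchColour G v σ q v = switchColour G v σ q u) : u ∈ disagreeSet G v σ q := by
  by_contra hu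
  rw [aux_switch_v, aux_switch_notMem hu] at h
  exact hq (h.trans hb.symm)

/-- Preimages of a good colouring. -/
lemma aux_preimage {σ τ : V → Fin k} {q : Fin k} (hb : σ v = σ u) (hg : τ v ≠ τ u)
    (h : switchColour G v σ q = τ) : σ = switchColour G v τ (τ u) ∧ q = τ v := by
  have hq : q = τ v := by rw [← h, aux_switch_v]
  refine ⟨?_, hq⟩
  have hu : u ∉ disagreeSet G v σ q := by
    intro hu
    apply hg
    rw [← hq, ← h]
    simp [switchColour, hu, hb]
  have : τ u = σ v := by rw [← h, aux_switch_notMem hu, hb]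
  rw [this, ← h, aux_switch_switch]

lemma aux_preimage' {τ : V → Fin k} (hu : u ∉ disagreeSet G v τ (τ u)) :
    switchColour G v τ (τ u) v = switchColour G v τ (τ u) u ∧
    switchColour G v (switchColour G v τ (τ u)) (τ v) = τ :=
  ⟨by rw [aux_switch_v, aux_switch_notMem hu], aux_switch_switch _ _⟩

open Classical in
lemma aux_step (hk : 2 ≤ k) (σ τ : V → Fin k) :
    (stepPMF hk G v u σ τ).toReal =
      if σ v = σ u then
        ((k : ℝ) - 1)⁻¹ * ∑ q ∈ Finset.univ.erase (σ v),
          (if switchColour G v σ q = τ then (1 : ℝ) else 0)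
      else if τ = σ then 1 else 0 := by
  unfold stepPMF
  split_ifs with h1 h2
  · rw [PMF.map_apply, tsum_fintype, ENNReal.toReal_sum]
    · rw [Finset.mul_sum, ← Finset.sum_subset (Finset.subset_univ (Finset.univ.erase (σ v)))]
      · refine Finset.sum_congr rfl fun q hq => ?_
        have hk1 : ((k - 1 : ℕ) : ℝ) = (k : ℝ) - 1 := by
          rw [Nat.cast_sub (by omega)]; simp
        rw [← hk1]
        by_cases h : switchColour G v σ q = τ
        · rw [if_pos h.symm, if_pos h, PMF.uniformOfFinset_apply_of_mem _ hq,
            Finset.card_erase_of_mem (Finset.mem_univ _), Finset.card_univ, Fintype.card_fin,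
            ENNReal.toReal_inv, ENNReal.toReal_natCast, mul_one]
        · rw [if_neg (Ne.symm h), if_neg h]
          simp
      · intro q _ hq
        split_ifs
        · rw [PMF.uniformOfFinset_apply_of_notMem _ hq]; simp
        · simp
    · intro q _
      split_ifs
      · exact PMF.apply_ne_top _ _
      · simp
  · subst h2; simp
  · simp [h2]

open Classical in
lemma aux_bind [Fintype V] (hk : 2 ≤ k) (hΩ : (colourings G k).Nonempty) (τ : V → Fin k) :
    (((PMF.uniformOfFinset (colourings G k) hΩ).bind (stepPMF hk G v u)) τ).toReal =
      ((colourings G k).card : ℝ)⁻¹ *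
        ∑ σ ∈ colourings G k, (stepPMF hk G v u σ τ).toReal := by
  rw [PMF.bind_apply, tsum_fintype, ENNReal.toReal_sum]
  · rw [Finset.mul_sum, ← Finset.sum_subset (Finset.subset_univ (colourings G k))]
    · refine Finset.sum_congr rfl fun q hq => ?_
      rw [PMF.uniformOfFinset_apply_of_mem _ hq]
      simp
    · intro q _ hq
      rw [PMF.uniformOfFinset_apply_of_notMem _ hq]; simp
  · intro q _
    exact ENNReal.mul_ne_top (PMF.apply_ne_top _ _) (PMF.apply_ne_top _ _)

lemma aux_sum_one {S : Type*} [Fintype S] (p : PMF S) : ∑ a, (p a).toReal = 1 := by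
  rw [← ENNReal.toReal_sum (fun a _ => PMF.apply_ne_top _ _), ← tsum_fintype (L := .unconditional S), PMF.tsum_coe]
  simp

/-- One-sided bound suffices for total variation. -/
lemma aux_tv {S : Type*} [Fintype S] (p p' : PMF S) (α : ℝ)
    (h : ∀ A : Finset S, ∑ a ∈ A, (p a).toReal ≤ ∑ a ∈ A, (p' a).toReal + α) (A : Finset S) :
    |∑ a ∈ A, (p a).toReal - ∑ a ∈ A, (p' a).toReal| ≤ α := by
  classical
  have h1 := h A
  have h2 := h Aᶜ
  have e1 := Finset.sum_add_sum_compl A (fun a => (p a).toReal)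
  have e2 := Finset.sum_add_sum_compl A (fun a => (p' a).toReal)
  rw [aux_sum_one] at e1 e2
  rw [abs_le]
  constructor <;> linarith

open Classical in
/-- Value of the output distribution on good colourings. -/
lemma aux_good_val [Fintype V] (hk : 2 ≤ k) (τ : V → Fin k)
    (hτ : ∀ x y, G.Adj x y → τ x ≠ τ y) (hg : τ v ≠ τ u) :
    ∑ σ ∈ colourings G k, (stepPMF hk G v u σ τ).toReal =
      1 + if u ∈ disagreeSet G v τ (τ u) then 0 else ((k : ℝ) - 1)⁻¹ := by
  have hmem : τ ∈ colourings G k := by simpa [colourings] using hτ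
  have key : ∀ σ ∈ colourings G k, (stepPMF hk G v u σ τ).toReal =
      (if σ = τ then 1 else 0) +
      (if σ = switchColour G v τ (τ u) then
        (if u ∈ disagreeSet G v τ (τ u) then 0 else ((k : ℝ) - 1)⁻¹) else 0) := by
    intro σ hσ
    rw [aux_step]
    by_cases hb : σ v = σ u
    · rw [if_pos hb]
      have hne : σ ≠ τ := by rintro rfl; exact hg hb
      rw [if_neg hne, zero_add]
      by_cases hs : σ = switchColour G v τ (τ u)
      · rw [if_pos hs]
        have hu : u ∉ disagreeSet G v τ (τ u) := by
          intro hu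
          have hb' := hb
          rw [hs, aux_switch_v] at hb'
          rcases aux_col_of_mem hu with h | h
          · exact hg h.symm
          · have : switchColour G v τ (τ u) u = τ v := by
              simp [switchColour, hu, Ne.symm hg]
            rw [this] at hb'
            exact hg hb'.symm
        rw [if_neg hu, Finset.sum_eq_single (τ v)]
        · rw [if_pos]
          · simp
          · rw [hs]; exact aux_switch_switch _ _
        · intro q _ hq
          rw [if_neg]
          intro h
          exact hq (aux_preimage hb hg h).2
        · intro h
          exfalso
          apply h
          rw [Finset.mem_erase, hs, aux_switch_v]
          exact ⟨hg, Finset.mem_univ _⟩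
      · rw [if_neg hs, Finset.sum_eq_zero, mul_zero]
        intro q _
        rw [if_neg]
        intro h
        exact hs (aux_preimage hb hg h).1
    · rw [if_neg hb]
      by_cases hs : σ = switchColour G v τ (τ u)
      · have hu : u ∈ disagreeSet G v τ (τ u) := by
          by_contra hu
          exact hb (by rw [hs]; exact (aux_preimage' hu).1)
        simp [hu, eq_comm]
      · simp [hs, eq_comm]
  rw [Finset.sum_congr rfl key, Finset.sum_add_distrib, Finset.sum_ite_eq', Finset.sum_ite_eq',
    if_pos hmem, if_pos]
  simpa [colourings] using aux_switch_proper hτ (τ u)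

end Helpers

open Classical in
lemma aux_badmass {V : Type*} [Fintype V] {k : ℕ} (hk : 2 ≤ k)
    (G : SimpleGraph V) (v u : V) (hΩ : (colourings G k).Nonempty)
    (α : ℝ) (hα₀ : 0 ≤ α)
    (hiso : ∀ c q : Fin k, c ≠ q →
      ((({σ : V → Fin k | (∀ x y, G.Adj x y → σ x ≠ σ y) ∧ σ v = c ∧ σ u = c ∧
            u ∈ disagreeSet G v σ q}).ncard : ℝ) ≤
        α * (({σ : V → Fin k | (∀ x y, G.Adj x y → σ x ≠ σ y) ∧ σ v = c ∧
            σ u = c}).ncard : ℝ))) :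
    ∑ τ ∈ (goodColourings G k v u)ᶜ, (((PMF.uniformOfFinset (colourings G k) hΩ).bind
          (stepPMF hk G v u)) τ).toReal ≤ α := by
  simp only [aux_bind]
  rw [← Finset.mul_sum, Finset.sum_comm]
  have hN : (0 : ℝ) < (colourings G k).card := by exact_mod_cast hΩ.card_pos
  have hk1 : (0 : ℝ) < (k : ℝ) - 1 := by
    have : (2 : ℝ) ≤ k := by exact_mod_cast hk
    linarith
  rw [inv_mul_le_iff₀ hN]
  have h1 : ∀ σ ∈ colourings G k,
      ∑ τ ∈ (goodColourings G k v u)ᶜ, (stepPMF hk G v u σ τ).toReal ≤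
      ((k : ℝ) - 1)⁻¹ * ∑ c, ∑ q ∈ Finset.univ.erase c,
        (if σ v = c ∧ σ u = c ∧ u ∈ disagreeSet G v σ q then (1 : ℝ) else 0) := by
    intro σ hσ
    have hσ' : ∀ x y, G.Adj x y → σ x ≠ σ y := by simpa [colourings] using hσ
    simp only [aux_step]
    by_cases hb : σ v = σ u
    · simp only [if_pos hb]
      rw [← Finset.mul_sum, Finset.sum_comm]
      refine mul_le_mul_of_nonneg_left ?_ (inv_pos.2 hk1).le
      refine le_trans ?_ (Finset.single_le_sum (f := fun c => ∑ q ∈ Finset.univ.erase c,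
        (if σ v = c ∧ σ u = c ∧ u ∈ disagreeSet G v σ q then (1 : ℝ) else 0))
        (fun c _ => Finset.sum_nonneg fun q _ => by split_ifs <;> norm_num)
        (Finset.mem_univ (σ v)))
      refine Finset.sum_le_sum fun q hq => ?_
      have hsum : ∑ τ ∈ (goodColourings G k v u)ᶜ,
          (if switchColour G v σ q = τ then (1 : ℝ) else 0) =
          if switchColour G v σ q ∈ (goodColourings G k v u)ᶜ then 1 else 0 := by
        convert Finset.sum_ite_eq (goodColourings G k v u)ᶜ (switchColour G v σ q)
          (fun _ => (1 : ℝ)) using 2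
      refine le_trans (le_of_eq (Eq.trans ?_ hsum)) ?_
      · refine Finset.sum_congr rfl fun τ _ => ?_
        congr
      by_cases hu : u ∈ disagreeSet G v σ q
      · have h5 : σ v = σ v ∧ σ u = σ v ∧ u ∈ disagreeSet G v σ q := ⟨rfl, hb.symm, hu⟩
        rw [if_pos h5]
        split_ifs <;> norm_num
      · rw [if_neg, if_neg (fun h => hu h.2.2)]
        rw [Finset.mem_compl, not_not]
        simp only [goodColourings, Set.Finite.mem_toFinset, Set.mem_ofPred_eq]
        exact ⟨aux_switch_proper hσ' q, fun h => hu (aux_bad_bad hb (Finset.ne_of_mem_erase hq) h)⟩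
    · simp only [if_neg hb]
      rw [Finset.sum_eq_zero]
      · refine mul_nonneg (inv_pos.2 hk1).le (Finset.sum_nonneg fun c _ =>
          Finset.sum_nonneg fun q _ => by split_ifs <;> norm_num)
      · intro τ hτ
        rw [if_neg]
        rintro rfl
        rw [Finset.mem_compl] at hτ
        apply hτ
        simp only [goodColourings, Set.Finite.mem_toFinset, Set.mem_ofPred_eq]
        exact ⟨hσ', hb⟩
  refine (Finset.sum_le_sum h1).trans ?_
  rw [← Finset.mul_sum, Finset.sum_comm, inv_mul_le_iff₀ hk1]
  have h2 : ∀ c : Fin k, ∑ σ ∈ colourings G k, ∑ q ∈ Finset.univ.erase c,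
        (if σ v = c ∧ σ u = c ∧ u ∈ disagreeSet G v σ q then (1 : ℝ) else 0) ≤
      ((k : ℝ) - 1) * (α * ∑ σ ∈ colourings G k, if σ v = c then (1 : ℝ) else 0) := by
    intro c
    rw [Finset.sum_comm]
    have h3 : ∀ q ∈ Finset.univ.erase c, ∑ σ ∈ colourings G k,
        (if σ v = c ∧ σ u = c ∧ u ∈ disagreeSet G v σ q then (1 : ℝ) else 0) ≤
        (α * ∑ σ ∈ colourings G k, if σ v = c then (1 : ℝ) else 0) := by
      intro q hq
      have := hiso c q (Finset.ne_of_mem_erase hq).symm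
      rw [Set.ncard_eq_toFinset_card', Set.ncard_eq_toFinset_card'] at this
      rw [Finset.sum_boole, Finset.sum_boole]
      refine le_trans (le_of_eq ?_) (this.trans (mul_le_mul_of_nonneg_left ?_ hα₀))
      · congr 2; ext σ; simp [colourings]
      · norm_cast
        apply Finset.card_le_card
        intro σ; simp [colourings]; tauto
    refine (Finset.sum_le_sum h3).trans (le_of_eq ?_)
    rw [Finset.sum_const, Finset.card_erase_of_mem (Finset.mem_univ _), Finset.card_univ,
      Fintype.card_fin, nsmul_eq_mul, Nat.cast_sub (by omega)]
    simp
  refine (Finset.sum_le_sum fun c _ => h2 c).trans (le_of_eq ?_)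
  rw [← Finset.mul_sum, ← Finset.mul_sum, Finset.sum_comm]
  have h4 : ∑ σ ∈ colourings G k, ∑ c : Fin k, (if σ v = c then (1 : ℝ) else 0) =
      (colourings G k).card := by simp
  rw [h4, mul_comm α]

open Classical in
lemma aux_D {V : Type*} [Fintype V] {k : ℕ}
    (G : SimpleGraph V) (v u : V) (α : ℝ)
    (hiso : ∀ c q : Fin k, c ≠ q →
      ((({σ : V → Fin k | (∀ x y, G.Adj x y → σ x ≠ σ y) ∧ σ v = q ∧ σ u = c ∧
            u ∈ disagreeSet G v σ c}).ncard : ℝ) ≤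
        α * (({σ : V → Fin k | (∀ x y, G.Adj x y → σ x ≠ σ y) ∧ σ v = q ∧
            σ u = c}).ncard : ℝ))) :
    (((goodColourings G k v u).filter fun τ => u ∈ disagreeSet G v τ (τ u)).card : ℝ) ≤
      α * (goodColourings G k v u).card := by
  rw [Finset.card_eq_sum_card_fiberwise (f := fun τ : V → Fin k => (τ v, τ u))
    (t := Finset.univ) (by simp),
    Finset.card_eq_sum_card_fiberwise (s := goodColourings G k v u)
    (f := fun τ : V → Fin k => (τ v, τ u)) (t := Finset.univ) (by simp)]
  push_cast
  rw [Finset.mul_sum]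
  refine Finset.sum_le_sum fun p _ => ?_
  obtain ⟨q, c⟩ := p
  by_cases hcq : c = q
  · subst hcq
    rw [Finset.filter_eq_empty_iff.2, Finset.filter_eq_empty_iff.2]
    · simp
    · intro τ hτ h
      simp [goodColourings] at hτ h
      exact hτ.2 (h.1.trans h.2.symm)
    · intro τ hτ h
      simp [goodColourings] at hτ h
      exact hτ.1.2 (h.1.trans h.2.symm)
  · have := hiso c q hcq
    rw [Set.ncard_eq_toFinset_card', Set.ncard_eq_toFinset_card'] at this
    refine le_trans (le_of_eq ?_) (this.trans (le_of_eq ?_))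
    · congr 2; ext σ; simp [goodColourings]; grind
    · congr 3; ext σ; simp [goodColourings]; grind

/-- if `k ≥ 2`, `Ω` and the good colourings are nonempty and for all
distinct colours `c q` at most an `α` fraction of `Ω(c,c)` has `u ∈ Q_{c,q}` and at most
an `α` fraction of `Ω(q,c)` has `u ∈ Q_{q,c}`, then the distribution `ν'` of the output
of STEP on a uniformly random proper colouring is within total variation distance `α`
of the uniform distribution `ν` on the good colourings. -/
theorem stmt6 {V : Type*} [Fintype V] {k : ℕ} (hk : 2 ≤ k)
    (G : SimpleGraph V) (v u : V) (huv : u ≠ v) (hadj : ¬ G.Adj v u)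
    (hΩ : (colourings G k).Nonempty) (hgood : (goodColourings G k v u).Nonempty)
    (α : ℝ) (hα₀ : 0 ≤ α) (hα₁ : α ≤ 1)
    (hiso : ∀ c q : Fin k, c ≠ q →
      ((({σ : V → Fin k | (∀ x y, G.Adj x y → σ x ≠ σ y) ∧ σ v = c ∧ σ u = c ∧
            u ∈ disagreeSet G v σ q}).ncard : ℝ) ≤
        α * (({σ : V → Fin k | (∀ x y, G.Adj x y → σ x ≠ σ y) ∧ σ v = c ∧
            σ u = c}).ncard : ℝ)) ∧
      ((({σ : V → Fin k | (∀ x y, G.Adj x y → σ x ≠ σ y) ∧ σ v = q ∧ σ u = c ∧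
            u ∈ disagreeSet G v σ c}).ncard : ℝ) ≤
        α * (({σ : V → Fin k | (∀ x y, G.Adj x y → σ x ≠ σ y) ∧ σ v = q ∧
            σ u = c}).ncard : ℝ))) :
    ∀ A : Finset (V → Fin k),
      |(∑ a ∈ A, ((PMF.uniformOfFinset (goodColourings G k v u) hgood) a).toReal) -
        (∑ a ∈ A, (((PMF.uniformOfFinset (colourings G k) hΩ).bind
          (stepPMF hk G v u)) a).toReal)| ≤ α := by
  classical
  intro A
  have hN : (0 : ℝ) < (colourings G k).card := by exact_mod_cast hΩ.card_pos
  have hg : (0 : ℝ) < (goodColourings G k v u).card := by exact_mod_cast hgood.card_pos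
  have hk1 : (0 : ℝ) < (k : ℝ) - 1 := by
    have : (2 : ℝ) ≤ k := by exact_mod_cast hk
    linarith
  have hgN : ((goodColourings G k v u).card : ℝ) ≤ (colourings G k).card := by
    norm_cast
    apply Finset.card_le_card
    intro σ
    simp only [goodColourings, colourings, Set.Finite.mem_toFinset, Set.mem_ofPred_eq]
    exact fun h => h.1
  have hbad := aux_badmass hk G v u hΩ α hα₀ (fun c q h => (hiso c q h).1)
  have hD := aux_D G v u α (fun c q h => (hiso c q h).2)
  have hval : ∀ τ ∈ goodColourings G k v u,
      (((PMF.uniformOfFinset (colourings G k) hΩ).bind (stepPMF hk G v u)) τ).toReal =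
      ((colourings G k).card : ℝ)⁻¹ *
        (1 + if u ∈ disagreeSet G v τ (τ u) then 0 else ((k : ℝ) - 1)⁻¹) := by
    intro τ hτ
    simp only [goodColourings, Set.Finite.mem_toFinset, Set.mem_ofPred_eq] at hτ
    rw [aux_bind, aux_good_val hk τ hτ.1 hτ.2]
  have hν : ∀ τ ∈ goodColourings G k v u,
      ((PMF.uniformOfFinset (goodColourings G k v u) hgood) τ).toReal =
        ((goodColourings G k v u).card : ℝ)⁻¹ := by
    intro τ hτ
    rw [PMF.uniformOfFinset_apply_of_mem _ hτ]; simp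
  have hν0 : ∀ τ ∉ goodColourings G k v u,
      ((PMF.uniformOfFinset (goodColourings G k v u) hgood) τ).toReal = 0 := by
    intro τ hτ
    rw [PMF.uniformOfFinset_apply_of_notMem _ hτ]; simp
  generalize (PMF.uniformOfFinset (goodColourings G k v u) hgood) = P at *
  generalize ((PMF.uniformOfFinset (colourings G k) hΩ).bind (stepPMF hk G v u)) = P' at *
  generalize ((colourings G k).card : ℝ) = N at *
  rcases le_total (N⁻¹ * (1 + ((k : ℝ) - 1)⁻¹)) ((goodColourings G k v u).card : ℝ)⁻¹ with hx | hx
  · rw [abs_sub_comm]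
    refine aux_tv P' P α (fun A => ?_) A
    have h1 : ∀ τ ∈ A, (P' τ).toReal ≤
        (P τ).toReal + if τ ∈ (goodColourings G k v u)ᶜ then (P' τ).toReal else 0 := by
      intro τ _
      by_cases hτ : τ ∈ goodColourings G k v u
      · rw [if_neg (by simpa using hτ), add_zero, hval τ hτ, hν τ hτ]
        refine le_trans (mul_le_mul_of_nonneg_left ?_ (inv_pos.2 hN).le) hx
        have := inv_pos.2 hk1
        split_ifs <;> linarith
      · rw [if_pos (by simpa using hτ), hν0 τ hτ, zero_add]
    refine (Finset.sum_le_sum h1).trans ?_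
    rw [Finset.sum_add_distrib]
    refine add_le_add le_rfl (le_trans ?_ hbad)
    rw [← Finset.sum_filter]
    refine Finset.sum_le_sum_of_subset_of_nonneg ?_ (fun _ _ _ => ENNReal.toReal_nonneg)
    intro τ hτ
    exact (Finset.mem_filter.1 hτ).2
  · refine aux_tv P P' α (fun A => ?_) A
    have h1 : ∀ τ ∈ A, (P τ).toReal ≤ (P' τ).toReal +
        if τ ∈ (goodColourings G k v u).filter fun τ => u ∈ disagreeSet G v τ (τ u) then
          ((goodColourings G k v u).card : ℝ)⁻¹ else 0 := by
      intro τ _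
      have h0 : 0 ≤ (P' τ).toReal := ENNReal.toReal_nonneg
      by_cases hτ : τ ∈ goodColourings G k v u
      · rw [hν τ hτ]
        by_cases hu : u ∈ disagreeSet G v τ (τ u)
        · rw [if_pos (Finset.mem_filter.2 ⟨hτ, hu⟩)]
          linarith
        · rw [if_neg (by simp [hu]), hval τ hτ, if_neg hu, add_zero]
          exact hx
      · rw [hν0 τ hτ]
        split_ifs <;> positivity
    refine (Finset.sum_le_sum h1).trans ?_
    rw [Finset.sum_add_distrib]
    refine add_le_add le_rfl ?_
    rw [← Finset.sum_filter, Finset.sum_const, nsmul_eq_mul, mul_inv_le_iff₀ hg]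
    refine le_trans ?_ hD
    norm_cast
    apply Finset.card_le_card
    intro τ hτ
    exact (Finset.mem_filter.1 hτ).2
end

section
/- Suppose each Ω_i is nonempty and α ∈ [0,1] is such that for every i = 0, …, r−1 and all distinct colours c, q ∈ Fin k: |{σ ∈ Ω_i(c,c) : u_i ∈ Q^i_{c,q}(σ)}| ≤ α·|Ω_i(c,c)| and |{σ ∈ Ω_i(q,c) : u_i ∈ Q^i_{q,c}(σ)}| ≤ α·|Ω_i(q,c)|. Let μ be the uniform distribution over Ω_r and let μ' be the distribution of Y_r produced by the random colouring algorithm. Then ‖μ − μ'‖ ≤ r·α. -/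
/-- The random colouring algorithm: `Y 0` is the given initial random colouring and
`Y (i+1)` is the output of STEP for `G i, v i, u i` on input `Y i`. -/
noncomputable def algPMF {V : Type*} [Fintype V] {k : ℕ} (hk : 2 ≤ k)
    (G : ℕ → SimpleGraph V) (v u : ℕ → V) (Y0 : PMF (V → Fin k)) :
    ℕ → PMF (V → Fin k)
  | 0 => Y0
  | i + 1 => (algPMF hk G v u Y0 i).bind (stepPMF hk (G i) (v i) (u i))


open Classical in
/-- expectation of a real function under a PMF on a finite type -/
noncomputable def ExR {S : Type*} [Fintype S] (p : PMF S) (f : S → ℝ) : ℝ :=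
  ∑ a, (p a).toReal * f a

lemma ExR_one {S : Type*} [Fintype S] (p : PMF S) : ExR p (fun _ => 1) = 1 := by
  unfold ExR
  have h := p.tsum_coe
  rw [tsum_fintype] at h
  simp only [mul_one]
  rw [← ENNReal.toReal_sum (fun a _ => p.apply_ne_top a), h]
  simp

lemma ExR_mono {S : Type*} [Fintype S] (p : PMF S) {f g : S → ℝ} (h : ∀ a, f a ≤ g a) :
    ExR p f ≤ ExR p g := by
  unfold ExR
  exact Finset.sum_le_sum fun a _ => mul_le_mul_of_nonneg_left (h a) ENNReal.toReal_nonneg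

lemma ExR_nonneg {S : Type*} [Fintype S] (p : PMF S) {f : S → ℝ} (h : ∀ a, 0 ≤ f a) :
    0 ≤ ExR p f := by
  unfold ExR
  exact Finset.sum_nonneg fun a _ => mul_nonneg ENNReal.toReal_nonneg (h a)

lemma ExR_le_one {S : Type*} [Fintype S] (p : PMF S) {f : S → ℝ} (h : ∀ a, f a ≤ 1) :
    ExR p f ≤ 1 := by
  rw [← ExR_one p]; exact ExR_mono p h

lemma ExR_one_sub {S : Type*} [Fintype S] (p : PMF S) (f : S → ℝ) :
    ExR p (fun a => 1 - f a) = 1 - ExR p f := by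
  have h := ExR_one p
  simp only [ExR, mul_one, mul_sub, Finset.sum_sub_distrib] at h ⊢
  rw [h]

lemma ExR_bind {S T : Type*} [Fintype S] [Fintype T] (p : PMF S) (K : S → PMF T) (f : T → ℝ) :
    ExR (p.bind K) f = ExR p (fun s => ExR (K s) f) := by
  unfold ExR
  simp only [PMF.bind_apply, tsum_fintype]
  have : ∀ b, (∑ a, p a * (K a) b).toReal = ∑ a, (p a).toReal * ((K a) b).toReal := by
    intro b
    rw [ENNReal.toReal_sum (fun a _ => ENNReal.mul_ne_top (p.apply_ne_top a) ((K a).apply_ne_top b))]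
    simp
  simp only [this, Finset.sum_mul, Finset.mul_sum]
  rw [Finset.sum_comm]
  simp only [mul_assoc]

open Classical in
lemma ExR_pure {S : Type*} [Fintype S] (s : S) (f : S → ℝ) : ExR (PMF.pure s) f = f s := by
  unfold ExR
  rw [Finset.sum_eq_single s]
  · simp [PMF.pure_apply]
  · intro b _ hb; simp [PMF.pure_apply, hb]
  · simp

lemma ExR_map {S T : Type*} [Fintype S] [Fintype T] (p : PMF S) (g : S → T) (f : T → ℝ) :
    ExR (p.map g) f = ExR p (fun s => f (g s)) := by
  rw [← PMF.bind_pure_comp, ExR_bind]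
  simp [ExR_pure]

open Classical in
lemma ExR_unif {S : Type*} [Fintype S] (s : Finset S) (hs : s.Nonempty) (f : S → ℝ) :
    ExR (PMF.uniformOfFinset s hs) f = (∑ a ∈ s, f a) / s.card := by
  unfold ExR
  rw [Finset.sum_div, ← Finset.sum_subset (Finset.subset_univ s)]
  · refine Finset.sum_congr rfl fun a ha => ?_
    rw [PMF.uniformOfFinset_apply_of_mem hs ha]
    simp [div_eq_inv_mul]
  · intro a _ ha
    rw [PMF.uniformOfFinset_apply_of_notMem hs ha]; simp

lemma mem_colourings' {V : Type*} [Fintype V] (G : SimpleGraph V) (k : ℕ) (σ : V → Fin k) :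
    σ ∈ colourings G k ↔ ∀ x y, G.Adj x y → σ x ≠ σ y := by
  simp [colourings]

section comb
variable {V : Type*} {k : ℕ} (G : SimpleGraph V) (v : V) (σ : V → Fin k) (q : Fin k)

lemma self_mem_dis : v ∈ disagreeSet G v σ q := ⟨.nil, by simp⟩

lemma dis_col {x : V} (h : x ∈ disagreeSet G v σ q) : σ x = σ v ∨ σ x = q := by
  obtain ⟨p, hp⟩ := h
  exact hp _ p.end_mem_support

lemma dis_adj {x y : V} (h : x ∈ disagreeSet G v σ q) (hxy : G.Adj x y)
    (hy : σ y = σ v ∨ σ y = q) : y ∈ disagreeSet G v σ q := by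
  obtain ⟨p, hp⟩ := h
  refine ⟨p.concat hxy, ?_⟩
  intro w hw
  rw [SimpleGraph.Walk.support_concat] at hw
  simp at hw
  rcases hw with hw | rfl
  · exact hp _ hw
  · exact hy

lemma switch_v : switchColour G v σ q v = q := by
  simp [switchColour, self_mem_dis]

lemma switch_of_not {x : V} (h : x ∉ disagreeSet G v σ q) : switchColour G v σ q x = σ x := by
  simp [switchColour, h]

lemma switch_of_mem {x : V} (h : x ∈ disagreeSet G v σ q) :
    (σ x = σ v ∧ switchColour G v σ q x = q) ∨
    (σ x ≠ σ v ∧ σ x = q ∧ switchColour G v σ q x = σ v) := by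
  have := dis_col G v σ q h
  by_cases h1 : σ x = σ v
  · simp [switchColour, h, h1]
  · have h2 : σ x = q := by tauto
    right
    refine ⟨h1, h2, ?_⟩
    simp only [switchColour, if_pos h, if_neg h1, if_pos h2]

lemma switch_iff (x : V) :
    (switchColour G v σ q x = q ∨ switchColour G v σ q x = σ v) ↔ (σ x = σ v ∨ σ x = q) := by
  by_cases h : x ∈ disagreeSet G v σ q
  · rcases switch_of_mem G v σ q h with ⟨a, b⟩ | ⟨a, b, c⟩ <;> tauto
  · rw [switch_of_not G v σ q h]; tauto

lemma dis_switch : disagreeSet G v (switchColour G v σ q) (σ v) = disagreeSet G v σ q := by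
  ext x
  simp only [disagreeSet, Set.mem_ofPred_eq, switch_v]
  simp only [switch_iff]

lemma switch_switch (hq : q ≠ σ v) :
    switchColour G v (switchColour G v σ q) (σ v) = σ := by
  funext x
  by_cases h : x ∈ disagreeSet G v σ q
  · have h' : x ∈ disagreeSet G v (switchColour G v σ q) (σ v) := by rwa [dis_switch]
    have e1 := switch_of_mem G v σ q h
    have e2 := switch_of_mem G v _ _ h'
    rw [switch_v] at e2
    grind
  · have h' : x ∉ disagreeSet G v (switchColour G v σ q) (σ v) := by rwa [dis_switch]
    rw [switch_of_not _ _ _ _ h', switch_of_not _ _ _ _ h]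

lemma switch_proper (hσ : ∀ x y, G.Adj x y → σ x ≠ σ y) (hq : q ≠ σ v) :
    ∀ x y, G.Adj x y → switchColour G v σ q x ≠ switchColour G v σ q y := by
  intro x y hxy
  have h0 := hσ x y hxy
  by_cases hx : x ∈ disagreeSet G v σ q <;> by_cases hy : y ∈ disagreeSet G v σ q
  · have := switch_of_mem G v σ q hx
    have := switch_of_mem G v σ q hy
    grind
  · have := switch_of_mem G v σ q hx
    have := switch_of_not G v σ q hy
    have := fun h => hy (dis_adj G v σ q hx hxy h)
    grind
  · have := switch_of_mem G v σ q hy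
    have := switch_of_not G v σ q hx
    have := fun h => hx (dis_adj G v σ q hy hxy.symm h)
    grind
  · rw [switch_of_not _ _ _ _ hx, switch_of_not _ _ _ _ hy]; exact h0

end comb

section step
variable {V : Type*} [Fintype V] {k : ℕ} (G : SimpleGraph V) (v u : V)

open Classical in
/-- `Ω(c,d)` -/
noncomputable def Om (k : ℕ) (c d : Fin k) : Finset (V → Fin k) :=
  (colourings G k).filter fun σ => σ v = c ∧ σ u = d

lemma mem_Om (c d : Fin k) (σ : V → Fin k) :
    σ ∈ Om G v u k c d ↔ (∀ x y, G.Adj x y → σ x ≠ σ y) ∧ σ v = c ∧ σ u = d := by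
  simp [Om, mem_colourings']

open Classical in
lemma Om_card_le (c d c' d' : Fin k) (e : Equiv.Perm (Fin k)) (h1 : e c = c') (h2 : e d = d') :
    (Om G v u k c d).card ≤ (Om G v u k c' d').card := by
  refine Finset.card_le_card_of_injOn (fun σ x => e (σ x)) ?_ ?_
  · intro σ hσ
    simp only [Finset.mem_coe, mem_Om] at hσ ⊢
    obtain ⟨a, rfl, rfl⟩ := hσ
    exact ⟨fun x y h => by simpa using a x y h, h1, h2⟩
  · intro σ _ τ _ h
    funext x
    exact e.injective (congrFun h x)

lemma Om_card_diag (c c' : Fin k) : (Om G v u k c c).card = (Om G v u k c' c').card :=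
  le_antisymm (Om_card_le G v u _ _ _ _ (Equiv.swap c c') (by simp) (by simp))
    (Om_card_le G v u _ _ _ _ (Equiv.swap c c') (by simp) (by simp))

lemma exists_perm2 (c d c' d' : Fin k) (h : c ≠ d) (h' : c' ≠ d') :
    ∃ e : Equiv.Perm (Fin k), e c = c' ∧ e d = d' := by
  refine ⟨(Equiv.swap c c').trans (Equiv.swap (Equiv.swap c c' d) d'), ?_, ?_⟩
  · simp only [Equiv.trans_apply, Equiv.swap_apply_left]
    apply Equiv.swap_apply_of_ne_of_ne
    · intro hh
      have := (Equiv.swap c c').injective (a₁ := c) (a₂ := d) (by simpa using hh)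
      exact h this
    · exact h'
  · simp

lemma Om_card_off (c d c' d' : Fin k) (h : c ≠ d) (h' : c' ≠ d') :
    (Om G v u k c d).card = (Om G v u k c' d').card := by
  obtain ⟨e, a, b⟩ := exists_perm2 c d c' d' h h'
  obtain ⟨e', a', b'⟩ := exists_perm2 c' d' c d h' h
  exact le_antisymm (Om_card_le G v u _ _ _ _ e a b) (Om_card_le G v u _ _ _ _ e' a' b')

open Classical in
lemma good_sum (c q : Fin k) (hcq : c ≠ q) (f : (V → Fin k) → ℝ) :
    ∑ σ ∈ (Om G v u k c c).filter (fun σ => u ∉ disagreeSet G v σ q), f (switchColour G v σ q) =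
    ∑ σ ∈ (Om G v u k q c).filter (fun σ => u ∉ disagreeSet G v σ c), f σ := by
  refine Finset.sum_bij' (fun σ _ => switchColour G v σ q) (fun σ _ => switchColour G v σ c)
    ?_ ?_ ?_ ?_ ?_
  · intro σ hσ
    simp only [Finset.mem_filter, mem_Om] at hσ ⊢
    obtain ⟨⟨a, b, d⟩, e⟩ := hσ
    subst b
    refine ⟨⟨switch_proper G v σ q a hcq.symm, switch_v _ _ _ _, ?_⟩, ?_⟩
    · rw [switch_of_not _ _ _ _ e, d]
    · rwa [dis_switch]
  · intro σ hσ
    simp only [Finset.mem_filter, mem_Om] at hσ ⊢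
    obtain ⟨⟨a, b, d⟩, e⟩ := hσ
    subst b
    refine ⟨⟨switch_proper G v σ c a hcq, switch_v _ _ _ _, ?_⟩, ?_⟩
    · rw [switch_of_not _ _ _ _ e, d]
    · rwa [dis_switch]
  · intro σ hσ
    simp only [Finset.mem_filter, mem_Om] at hσ
    obtain ⟨⟨a, b, d⟩, e⟩ := hσ
    subst b
    exact switch_switch _ _ _ _ hcq.symm
  · intro σ hσ
    simp only [Finset.mem_filter, mem_Om] at hσ
    obtain ⟨⟨a, b, d⟩, e⟩ := hσ
    subst b
    exact switch_switch _ _ _ _ hcq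
  · intro σ hσ; rfl

lemma arith1 (α D E n b b' g x y : ℝ) (hD : D = n + b) (hE : E = n + b') (hn : 0 ≤ n)
    (hb : b ≤ α * D) (hb' : b' ≤ α * E) (hb0 : 0 ≤ b) (hb0' : 0 ≤ b')
    (hg : g ≤ n) (hg0 : 0 ≤ g) (hx : 0 ≤ x) (hy : y ≤ b') :
    D * (g + y) - E * (g + x) ≤ α * D * E := by
  have hD0 : 0 ≤ D := by linarith
  have hE0 : 0 ≤ E := by linarith
  have h1 : D * y ≤ D * b' := mul_le_mul_of_nonneg_left hy hD0
  have h2 : 0 ≤ E * x := mul_nonneg hE0 hx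
  rcases le_total D E with h | h
  · nlinarith [mul_nonneg (sub_nonneg.2 h) hg0, mul_le_mul_of_nonneg_left hb' hD0]
  · nlinarith [mul_le_mul_of_nonneg_left hg (sub_nonneg.2 h), mul_le_mul_of_nonneg_left hb hE0]

open Classical in
lemma pair_bound (c q : Fin k) (hcq : c ≠ q) (f : (V → Fin k) → ℝ) (α : ℝ)
    (hf0 : ∀ a, 0 ≤ f a) (hf1 : ∀ a, f a ≤ 1)
    (h1 : (((Om G v u k c c).filter (fun σ => u ∈ disagreeSet G v σ q)).card : ℝ) ≤
      α * (Om G v u k c c).card)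
    (h2 : (((Om G v u k q c).filter (fun σ => u ∈ disagreeSet G v σ c)).card : ℝ) ≤
      α * (Om G v u k q c).card) :
    ((Om G v u k c c).card : ℝ) * (∑ σ ∈ Om G v u k q c, f σ) -
      ((Om G v u k q c).card : ℝ) * (∑ σ ∈ Om G v u k c c, f (switchColour G v σ q)) ≤
    α * (Om G v u k c c).card * (Om G v u k q c).card := by
  have hg := good_sum G v u c q hcq f
  have hc := good_sum G v u c q hcq (fun _ => 1)
  simp only [Finset.sum_const, nsmul_eq_mul, mul_one] at hc
  rw [← Finset.sum_filter_not_add_sum_filter (Om G v u k q c) (fun σ => u ∈ disagreeSet G v σ c),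
    ← Finset.sum_filter_not_add_sum_filter (Om G v u k c c) (fun σ => u ∈ disagreeSet G v σ q), hg]
  have hle : ∀ s : Finset (V → Fin k), ∑ σ ∈ s, f σ ≤ s.card := fun s => by
    simpa using Finset.sum_le_card_nsmul s f 1 (fun a _ => hf1 a)
  refine arith1 α _ _ _ _ _ _ _ _ ?_ ?_ (Nat.cast_nonneg _) h1 h2 (Nat.cast_nonneg _)
    (Nat.cast_nonneg _) (hle _) (Finset.sum_nonneg fun a _ => hf0 a)
    (Finset.sum_nonneg fun a _ => hf0 _) (hle _)
  · rw [← hc, add_comm, ← Nat.cast_add, Finset.card_filter_add_card_filter_not]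
  · rw [add_comm, ← Nat.cast_add, Finset.card_filter_add_card_filter_not]

open Classical in
lemma sum_split (f : (V → Fin k) → ℝ) :
    ∑ σ ∈ colourings G k, f σ = ∑ c : Fin k, ∑ d : Fin k, ∑ σ ∈ Om G v u k c d, f σ := by
  rw [← Finset.sum_fiberwise (colourings G k) (fun σ => (σ v, σ u)) f, Fintype.sum_prod_type]
  refine Finset.sum_congr rfl fun c _ => Finset.sum_congr rfl fun d _ => ?_
  refine Finset.sum_congr ?_ fun _ _ => rfl
  ext σ
  simp [Om]

open Classical in
lemma sum_split' (G' : SimpleGraph V) (hG' : G' = G ⊔ SimpleGraph.fromEdgeSet {s(v, u)})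
    (hvu : v ≠ u) (f : (V → Fin k) → ℝ) :
    ∑ σ ∈ colourings G' k, f σ =
      ∑ c : Fin k, ∑ q ∈ Finset.univ.erase c, ∑ σ ∈ Om G v u k q c, f σ := by
  have : colourings G' k = (colourings G k).filter (fun σ => σ v ≠ σ u) := by
    ext σ
    simp only [mem_colourings', Finset.mem_filter, hG']
    constructor
    · intro h
      refine ⟨fun x y hxy => h x y (Or.inl hxy), h v u (Or.inr ?_)⟩
      simp [hvu]
    · rintro ⟨h, h'⟩ x y (hxy | hxy)
      · exact h x y hxy
      · simp at hxy
        grind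
  rw [this, Finset.sum_filter, sum_split G v u, Finset.sum_comm]
  refine Finset.sum_congr rfl fun c _ => ?_
  rw [← Finset.sum_erase_add _ _ (Finset.mem_univ c)]
  have h0 : ∑ σ ∈ Om G v u k c c, (if σ v ≠ σ u then f σ else 0) = 0 := by
    refine Finset.sum_eq_zero fun σ hσ => ?_
    rw [mem_Om] at hσ
    simp [hσ]
  rw [h0, add_zero]
  refine Finset.sum_congr rfl fun q hq => Finset.sum_congr rfl fun σ hσ => ?_
  rw [mem_Om] at hσ
  have := Finset.ne_of_mem_erase hq
  simp [hσ, this]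

open Classical in
lemma ExR_step (hk : 2 ≤ k) (σ : V → Fin k) (f : (V → Fin k) → ℝ) :
    ExR (stepPMF hk G v u σ) f = if σ v = σ u then
      (∑ q ∈ Finset.univ.erase (σ v), f (switchColour G v σ q)) / (k - 1 : ℝ) else f σ := by
  unfold stepPMF
  split_ifs with h
  · rw [ExR_map, ExR_unif]
    have : (((Finset.univ : Finset (Fin k)).erase (σ v)).card : ℝ) = (k - 1 : ℝ) := by
      rw [Finset.card_erase_of_mem (Finset.mem_univ _), Finset.card_univ, Fintype.card_fin,
        Nat.cast_sub (by omega)]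
      simp
    rw [← this]
  · rw [ExR_pure]

open Classical in
lemma step_bound (hk : 2 ≤ k) (G' : SimpleGraph V)
    (hG' : G' = G ⊔ SimpleGraph.fromEdgeSet {s(v, u)})
    (hvu : v ≠ u) (hne : (colourings G k).Nonempty) (hne' : (colourings G' k).Nonempty)
    (f : (V → Fin k) → ℝ) (α : ℝ) (hα : 0 ≤ α)
    (hf0 : ∀ a, 0 ≤ f a) (hf1 : ∀ a, f a ≤ 1)
    (h : ∀ c q : Fin k, c ≠ q →
      ((((Om G v u k c c).filter (fun σ => u ∈ disagreeSet G v σ q)).card : ℝ) ≤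
        α * (Om G v u k c c).card) ∧
      ((((Om G v u k q c).filter (fun σ => u ∈ disagreeSet G v σ c)).card : ℝ) ≤
        α * (Om G v u k q c).card)) :
    ExR (PMF.uniformOfFinset (colourings G' k) hne') f -
      ExR (PMF.uniformOfFinset (colourings G k) hne) (fun σ => ExR (stepPMF hk G v u σ) f) ≤ α := by
  have hk1 : (0 : ℝ) < k - 1 := by
    have : (2 : ℝ) ≤ k := by exact_mod_cast hk
    linarith
  have hk0 : (0 : ℝ) < k := by linarith
  obtain ⟨D, hD⟩ : ∃ D : ℕ, ∀ c, (Om G v u k c c).card = D :=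
    ⟨_, fun c => Om_card_diag G v u c ⟨0, by omega⟩⟩
  obtain ⟨E, hE⟩ : ∃ E : ℕ, ∀ c q, q ≠ c → (Om G v u k q c).card = E :=
    ⟨_, fun c q hq => Om_card_off G v u q c ⟨0, by omega⟩ ⟨1, by omega⟩ hq (by simp)⟩
  have herase : ∀ c : Fin k, (((Finset.univ : Finset (Fin k)).erase c).card : ℝ) = (k - 1 : ℝ) := by
    intro c
    rw [Finset.card_erase_of_mem (Finset.mem_univ _), Finset.card_univ, Fintype.card_fin,
        Nat.cast_sub (by omega)]
    simp
  have hsum : ∀ g : (V → Fin k) → ℝ, ∑ σ ∈ colourings G k, g σ =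
      ∑ σ ∈ colourings G' k, g σ + ∑ c, ∑ σ ∈ Om G v u k c c, g σ := by
    intro g
    rw [sum_split G v u, sum_split' G v u G' hG' hvu, Finset.sum_comm, ← Finset.sum_add_distrib]
    refine Finset.sum_congr rfl fun c _ => ?_
    rw [Finset.sum_erase_add _ _ (Finset.mem_univ c)]
  have hM : ((colourings G' k).card : ℝ) = k * (k - 1) * E := by
    have := sum_split' G v u G' hG' hvu (k := k) (fun _ => 1)
    simp only [Finset.sum_const, nsmul_eq_mul, mul_one] at this
    rw [this]
    have : ∀ c : Fin k, ∑ q ∈ Finset.univ.erase c, ((Om G v u k q c).card : ℝ) = (k - 1) * E := by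
      intro c
      rw [Finset.sum_congr rfl (fun q hq => by rw [hE c q (Finset.ne_of_mem_erase hq)])]
      rw [Finset.sum_const, nsmul_eq_mul, herase]
    simp only [this]
    simp [mul_assoc]
  have hN : ((colourings G k).card : ℝ) = k * (k - 1) * E + k * D := by
    have := hsum (fun _ => 1)
    simp only [Finset.sum_const, nsmul_eq_mul, mul_one, hM, hD] at this
    simpa using this
  rw [ExR_unif, ExR_unif, hsum]
  have e1 : ∑ σ ∈ colourings G' k, ExR (stepPMF hk G v u σ) f = ∑ σ ∈ colourings G' k, f σ := by
    refine Finset.sum_congr rfl fun σ hσ => ?_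
    rw [mem_colourings'] at hσ
    have := hσ v u (by rw [hG']; right; simp [hvu])
    rw [ExR_step, if_neg this]
  have e2 : (k - 1 : ℝ) * ∑ c, ∑ σ ∈ Om G v u k c c, ExR (stepPMF hk G v u σ) f =
      ∑ c, ∑ q ∈ Finset.univ.erase c, ∑ σ ∈ Om G v u k c c, f (switchColour G v σ q) := by
    rw [Finset.mul_sum]
    refine Finset.sum_congr rfl fun c _ => ?_
    rw [Finset.mul_sum, Finset.sum_comm]
    refine Finset.sum_congr rfl fun σ hσ => ?_
    rw [mem_Om] at hσ
    rw [ExR_step, if_pos (by rw [hσ.2.1, hσ.2.2]), mul_div_cancel₀ _ hk1.ne', hσ.2.1]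
  rw [e1]
  have key : (D : ℝ) * (∑ σ ∈ colourings G' k, f σ) -
      E * ((k - 1 : ℝ) * ∑ c, ∑ σ ∈ Om G v u k c c, ExR (stepPMF hk G v u σ) f) ≤
      α * D * (k * (k - 1) * E) := by
    rw [e2, sum_split' G v u G' hG' hvu, Finset.mul_sum, Finset.mul_sum, ← Finset.sum_sub_distrib]
    have : ∀ c ∈ (Finset.univ : Finset (Fin k)),
        (D : ℝ) * (∑ q ∈ Finset.univ.erase c, ∑ σ ∈ Om G v u k q c, f σ) -
        E * (∑ q ∈ Finset.univ.erase c, ∑ σ ∈ Om G v u k c c, f (switchColour G v σ q)) ≤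
        (k - 1) * (α * D * E) := by
      intro c _
      rw [Finset.mul_sum, Finset.mul_sum, ← Finset.sum_sub_distrib, ← herase c, ← nsmul_eq_mul]
      refine Finset.sum_le_card_nsmul _ _ _ fun q hq => ?_
      have hq' := Finset.ne_of_mem_erase hq
      have := pair_bound G v u c q hq'.symm f α hf0 hf1 (h c q hq'.symm).1 (h c q hq'.symm).2
      rwa [hD, hE c q hq'] at this
    refine (Finset.sum_le_card_nsmul _ _ _ this).trans (le_of_eq ?_)
    simp
    ring
  generalize ∑ c, ∑ σ ∈ Om G v u k c c, ExR (stepPMF hk G v u σ) f = S at *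
  generalize ∑ σ ∈ colourings G' k, f σ = F at *
  have hM0 : (0 : ℝ) < (colourings G' k).card := by exact_mod_cast hne'.card_pos
  have hN0 : (0 : ℝ) < (colourings G k).card := by exact_mod_cast hne.card_pos
  rw [div_sub_div _ _ hM0.ne' hN0.ne', div_le_iff₀ (mul_pos hM0 hN0)]
  rw [hM] at *
  rw [hN] at *
  generalize (D : ℝ) = D' at *
  have h3 := mul_le_mul_of_nonneg_left key hk0.le
  have h4 : 0 ≤ α * (k * (k - 1) * E) * (k * (k - 1) * E) := by positivity
  nlinarith

end step

/-- if each `G i` is obtained from `G (i+1)` by deleting the edge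
`{v i, u i}`, each `Ω i` is nonempty, and for every `i < r` and all distinct colours
`c q` at most an `α` fraction of `Ω_i(c,c)` has `u i ∈ Q^i_{c,q}` and at most an `α`
fraction of `Ω_i(q,c)` has `u i ∈ Q^i_{q,c}`, then the output distribution `μ'` of the
random colouring algorithm is within total variation distance `r·α` of the uniform
distribution `μ` on `Ω r`. -/
theorem stmt7 {V : Type*} [Fintype V] {k : ℕ} (hk : 2 ≤ k) (r : ℕ)
    (G : ℕ → SimpleGraph V) (v u : ℕ → V)
    (hdel : ∀ i < r, v i ≠ u i ∧ ¬ (G i).Adj (v i) (u i) ∧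
      G (i + 1) = G i ⊔ SimpleGraph.fromEdgeSet {s(v i, u i)})
    (hne : ∀ i ≤ r, (colourings (G i) k).Nonempty)
    (α : ℝ) (hα₀ : 0 ≤ α) (hα₁ : α ≤ 1)
    (hiso : ∀ i < r, ∀ c q : Fin k, c ≠ q →
      ((({σ : V → Fin k | (∀ x y, (G i).Adj x y → σ x ≠ σ y) ∧ σ (v i) = c ∧
            σ (u i) = c ∧ u i ∈ disagreeSet (G i) (v i) σ q}).ncard : ℝ) ≤
        α * (({σ : V → Fin k | (∀ x y, (G i).Adj x y → σ x ≠ σ y) ∧ σ (v i) = c ∧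
            σ (u i) = c}).ncard : ℝ)) ∧
      ((({σ : V → Fin k | (∀ x y, (G i).Adj x y → σ x ≠ σ y) ∧ σ (v i) = q ∧
            σ (u i) = c ∧ u i ∈ disagreeSet (G i) (v i) σ c}).ncard : ℝ) ≤
        α * (({σ : V → Fin k | (∀ x y, (G i).Adj x y → σ x ≠ σ y) ∧ σ (v i) = q ∧
            σ (u i) = c}).ncard : ℝ))) :
    ∀ A : Finset (V → Fin k),
      |(∑ a ∈ A, ((PMF.uniformOfFinset (colourings (G r) k) (hne r le_rfl)) a).toReal) -
        (∑ a ∈ A, ((algPMF hk G v u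
          (PMF.uniformOfFinset (colourings (G 0) k) (hne 0 (Nat.zero_le r))) r) a).toReal)|
      ≤ (r : ℝ) * α := by
    classical
  have main : ∀ n (hn : n ≤ r), ∀ f : (V → Fin k) → ℝ, (∀ a, 0 ≤ f a) → (∀ a, f a ≤ 1) →
      ExR (PMF.uniformOfFinset (colourings (G n) k) (hne n hn)) f -
      ExR (algPMF hk G v u
        (PMF.uniformOfFinset (colourings (G 0) k) (hne 0 (Nat.zero_le r))) n) f ≤ n * α := by
    intro n
    induction n with
    | zero =>
      intro hn f _ _
      simp [algPMF]
    | succ n ih =>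
      intro hn f hf0 hf1
      have hlt : n < r := hn
      obtain ⟨hvu, _, hG'⟩ := hdel n hlt
      have h1 := ih hlt.le (fun σ => ExR (stepPMF hk (G n) (v n) (u n) σ) f)
        (fun σ => ExR_nonneg _ hf0) (fun σ => ExR_le_one _ hf1)
      have h2 := step_bound (G n) (v n) (u n) hk (G (n + 1)) hG' hvu (hne n hlt.le)
        (hne (n + 1) hn) f α hα₀ hf0 hf1 (by
          intro c q hcq
          have := hiso n hlt c q hcq
          simp only [← Finset.coe_filter_univ, Set.ncard_coe_finset] at this
          have e1 : ∀ c d : Fin k, Om (G n) (v n) (u n) k c d = Finset.univ.filter (fun σ : V → Fin k =>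
              (∀ x y, (G n).Adj x y → σ x ≠ σ y) ∧ σ (v n) = c ∧ σ (u n) = d) := by
            intro c d; ext σ; simp [mem_Om]
          simp only [e1, Finset.filter_filter, and_assoc]
          exact this)
      have h3 : algPMF hk G v u
          (PMF.uniformOfFinset (colourings (G 0) k) (hne 0 (Nat.zero_le r))) (n + 1) =
          (algPMF hk G v u (PMF.uniformOfFinset (colourings (G 0) k) (hne 0 (Nat.zero_le r))) n).bind
            (stepPMF hk (G n) (v n) (u n)) := rfl
      rw [h3, ExR_bind]
      push_cast
      linarith
  intro A
  have conv : ∀ p : PMF (V → Fin k), ∑ a ∈ A, (p a).toReal =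
      ExR p (fun a => if a ∈ A then 1 else 0) := by
    intro p
    simp [ExR]
  rw [conv, conv, abs_le]
  have ha := main r le_rfl (fun a => if a ∈ A then 1 else 0)
    (fun a => by split_ifs <;> norm_num)
    (fun a => by split_ifs <;> norm_num)
  have hb := main r le_rfl (fun a => 1 - if a ∈ A then 1 else 0)
    (fun a => by split_ifs <;> norm_num)
    (fun a => by split_ifs <;> norm_num)
  rw [ExR_one_sub, ExR_one_sub] at hb
  constructor <;> linarith
end

section
/- Fix a colour c ∈ Fin k with {σ ∈ Ω : σ(v) = c} nonempty, and suppose k ≥ 2. Let x₁ = v, x₂, …, x_l be the vertices of a simple path in G and suppose k > deg(x_j) for j = 2, …, l, where deg denotes the degree in G. If σ is chosen uniformly at random from {σ ∈ Ω : σ(v) = c} and q is chosen uniformly at random from Fin k \ {c}, independently of σ, then the probability that σ(x_j) ∈ {c, q} for all j = 2, …, l is at most ∏_{j=2}^{l} 1/(k − deg(x_j)). -/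
open Classical in
theorem stmt8_step {V : Type*} [Fintype V] [DecidableEq V] {k : ℕ}
    (G : SimpleGraph V) [DecidableRel G.Adj] (v : V) (c : Fin k)
    (x : ℕ → V) (hx1 : x 1 = v) (m : ℕ) (hm : 1 ≤ m)
    (hinj : ∀ i, 1 ≤ i → i ≤ m → x i ≠ x (m + 1))
    (hadj : G.Adj (x m) (x (m + 1))) :
    ({p : (V → Fin k) × Fin k |
        (∀ a b, G.Adj a b → p.1 a ≠ p.1 b) ∧ p.1 v = c ∧ p.2 ≠ c ∧
          ∀ j, 2 ≤ j → j ≤ m + 1 → p.1 (x j) = c ∨ p.1 (x j) = p.2}).ncard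
        * (k - G.degree (x (m + 1))) ≤
    ({p : (V → Fin k) × Fin k |
        (∀ a b, G.Adj a b → p.1 a ≠ p.1 b) ∧ p.1 v = c ∧ p.2 ≠ c ∧
          ∀ j, 2 ≤ j → j ≤ m → p.1 (x j) = c ∨ p.1 (x j) = p.2}).ncard := by
  rw [Set.ncard_eq_toFinset_card _ (Set.toFinite _), Set.ncard_eq_toFinset_card _ (Set.toFinite _)]
  set S := Set.Finite.toFinset (Set.toFinite {p : (V → Fin k) × Fin k |
        (∀ a b, G.Adj a b → p.1 a ≠ p.1 b) ∧ p.1 v = c ∧ p.2 ≠ c ∧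
          ∀ j, 2 ≤ j → j ≤ m + 1 → p.1 (x j) = c ∨ p.1 (x j) = p.2}) with hS
  set u := x (m + 1) with hu
  let A : (V → Fin k) × Fin k → Finset (Fin k) :=
    fun p => Finset.univ \ (G.neighborFinset u).image p.1
  have hA : ∀ p, k - G.degree u ≤ (A p).card := by
    intro p
    have h1 := Finset.le_card_sdiff ((G.neighborFinset u).image p.1) Finset.univ
    have h2 : ((G.neighborFinset u).image p.1).card ≤ G.degree u := by
      rw [← G.card_neighborFinset_eq_degree]; exact Finset.card_image_le
    simp only [Finset.card_univ, Fintype.card_fin] at h1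
    exact le_trans (by omega) h1
  have hcol : ∀ p ∈ S, (p.1 (x m) = c ∨ p.1 (x m) = p.2) ∧ (p.1 u = c ∨ p.1 u = p.2) ∧
      p.1 (x m) ≠ p.1 u ∧ p.2 ≠ c := by
    intro p hp
    simp only [hS, Set.Finite.mem_toFinset, Set.mem_ofPred_eq] at hp
    obtain ⟨h1, h2, h3, h4⟩ := hp
    refine ⟨?_, h4 _ (by omega) le_rfl, h1 _ _ hadj, h3⟩
    rcases Nat.lt_or_ge m 2 with h | h
    · left
      have : m = 1 := by omega
      rw [this, hx1, h2]
    · exact h4 m h (by omega)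
  have hum : x m ≠ u := hinj m hm le_rfl
  calc S.card * (k - G.degree u) = ∑ p ∈ S, (k - G.degree u) := by
        rw [Finset.sum_const, smul_eq_mul]
    _ ≤ ∑ p ∈ S, (A p).card := Finset.sum_le_sum fun p _ => hA p
    _ = (S.sigma A).card := (Finset.card_sigma _ _).symm
    _ ≤ _ := by
      refine Finset.card_le_card_of_injOn
        (fun t => (Function.update t.1.1 u t.2, t.1.2)) ?_ ?_
      · rintro ⟨⟨σ, q⟩, a⟩ ht
        simp only [Finset.coe_sigma, Set.mem_sigma_iff, Finset.mem_coe, hS, Set.Finite.mem_toFinset,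
          Set.mem_ofPred_eq, A, Finset.mem_sdiff, Finset.mem_univ, true_and, Finset.mem_image,
          SimpleGraph.mem_neighborFinset, not_exists, not_and] at ht ⊢
        obtain ⟨⟨h1, h2, h3, h4⟩, h5⟩ := ht
        refine ⟨?_, ?_, h3, ?_⟩
        · intro y z hyz
          by_cases hy : y = u
          · have hz : z ≠ u := fun h => hyz.ne (hy.trans h.symm)
            rw [hy, Function.update_self, Function.update_of_ne hz]
            exact fun h => h5 z (hy ▸ hyz) h.symm
          · rw [Function.update_of_ne hy]
            by_cases hz : z = u
            · rw [hz, Function.update_self]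
              exact h5 y (hz ▸ hyz.symm)
            · rw [Function.update_of_ne hz]
              exact h1 _ _ hyz
        · rw [Function.update_of_ne (hx1 ▸ hinj 1 le_rfl hm)]
          exact h2
        · intro j hj hjm
          rw [Function.update_of_ne (hinj j (by omega) hjm)]
          exact h4 j hj (by omega)
      · rintro ⟨⟨σ, q⟩, a⟩ ht ⟨⟨τ, r⟩, b⟩ hs h
        simp only [Finset.coe_sigma, Set.mem_sigma_iff, Finset.mem_coe] at ht hs
        simp only [Prod.mk.injEq] at h
        obtain ⟨h, rfl⟩ := h
        have e1 : a = b := by simpa using congrFun h u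
        have e2 : ∀ y, y ≠ u → σ y = τ y := fun y hy => by
          simpa [Function.update_of_ne hy] using congrFun h y
        have e3 : σ u = τ u := by
          have g1 := hcol _ ht.1
          have g2 := hcol _ hs.1
          have g3 := e2 _ hum
          simp only at g1 g2
          grind
        have e4 : σ = τ := by
          funext y
          by_cases hy : y = u
          · rw [hy, e3]
          · exact e2 y hy
        subst e1 e4
        rfl

/-- let `x 1 = v, x 2, …, x l` be the vertices of a simple path in `G` with
`k > deg (x j)` for `j = 2, …, l`. If `σ` is uniform on the proper `k`-colourings with
`σ v = c` and `q` is uniform on `Fin k \ {c}`, independently, then the probability that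
`σ (x j) ∈ {c, q}` for all `j = 2, …, l` is at most `∏_{j=2}^{l} 1/(k − deg (x j))`.
The probability is expressed by counting pairs `(σ, q)`. -/
theorem stmt8 {V : Type*} [Fintype V] [DecidableEq V] {k : ℕ} (hk : 2 ≤ k)
    (G : SimpleGraph V) [DecidableRel G.Adj] (v : V) (c : Fin k)
    (l : ℕ) (hl : 1 ≤ l) (x : ℕ → V) (hx1 : x 1 = v)
    (hinj : ∀ i j, 1 ≤ i → i ≤ l → 1 ≤ j → j ≤ l → x i = x j → i = j)
    (hadj : ∀ j, 1 ≤ j → j < l → G.Adj (x j) (x (j + 1)))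
    (hdeg : ∀ j, 2 ≤ j → j ≤ l → G.degree (x j) < k)
    (hne : {σ : V → Fin k | (∀ a b, G.Adj a b → σ a ≠ σ b) ∧ σ v = c}.Nonempty) :
    (({p : (V → Fin k) × Fin k |
        (∀ a b, G.Adj a b → p.1 a ≠ p.1 b) ∧ p.1 v = c ∧ p.2 ≠ c ∧
          ∀ j, 2 ≤ j → j ≤ l → p.1 (x j) = c ∨ p.1 (x j) = p.2}).ncard : ℝ) /
      ((({σ : V → Fin k | (∀ a b, G.Adj a b → σ a ≠ σ b) ∧ σ v = c}).ncard : ℝ) *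
        ((k : ℝ) - 1)) ≤
    ∏ j ∈ Finset.Icc 2 l, (1 : ℝ) / ((k : ℝ) - (G.degree (x j) : ℝ)) := by
  have hN : 0 < ({σ : V → Fin k | (∀ a b, G.Adj a b → σ a ≠ σ b) ∧ σ v = c}).ncard :=
    (Set.ncard_pos (Set.toFinite _)).2 hne
  have hk1 : (0 : ℝ) < (k : ℝ) - 1 := by
    have : (2 : ℝ) ≤ k := by exact_mod_cast hk
    linarith
  rw [div_le_iff₀ (mul_pos (by exact_mod_cast hN) hk1)]
  have key : ∀ m, 1 ≤ m → m ≤ l → (({p : (V → Fin k) × Fin k |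
        (∀ a b, G.Adj a b → p.1 a ≠ p.1 b) ∧ p.1 v = c ∧ p.2 ≠ c ∧
          ∀ j, 2 ≤ j → j ≤ m → p.1 (x j) = c ∨ p.1 (x j) = p.2}).ncard : ℝ) ≤
      (∏ j ∈ Finset.Icc 2 m, (1 : ℝ) / ((k : ℝ) - (G.degree (x j) : ℝ))) *
      ((({σ : V → Fin k | (∀ a b, G.Adj a b → σ a ≠ σ b) ∧ σ v = c}).ncard : ℝ) *
        ((k : ℝ) - 1)) := by
    intro m hm
    induction m, hm using Nat.le_induction with
    | base =>
      intro _
      have e : {p : (V → Fin k) × Fin k |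
        (∀ a b, G.Adj a b → p.1 a ≠ p.1 b) ∧ p.1 v = c ∧ p.2 ≠ c ∧
          ∀ j, 2 ≤ j → j ≤ 1 → p.1 (x j) = c ∨ p.1 (x j) = p.2} =
        {σ : V → Fin k | (∀ a b, G.Adj a b → σ a ≠ σ b) ∧ σ v = c} ×ˢ ({c}ᶜ : Set (Fin k)) := by
        ext p
        simp only [Set.mem_ofPred_eq, Set.mem_prod, Set.mem_compl_iff, Set.mem_singleton_iff]
        constructor
        · rintro ⟨h1, h2, h3, -⟩
          exact ⟨⟨h1, h2⟩, h3⟩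
        · rintro ⟨⟨h1, h2⟩, h3⟩
          exact ⟨h1, h2, h3, fun j _ _ => by omega⟩
      have e2 : (({c}ᶜ : Set (Fin k)).ncard : ℝ) = (k : ℝ) - 1 := by
        rw [Set.ncard_compl, Set.ncard_singleton, Nat.card_fin, Nat.cast_sub (by omega)]
        simp
      rw [e, Set.ncard_prod, Nat.cast_mul, e2]
      simp
    | succ m hm ih =>
      intro hml
      have h1 := ih (by omega)
      have h2 := stmt8_step G v c x hx1 m hm
        (fun i hi him h => by
          have := hinj i (m + 1) hi (by omega) (by omega) hml h
          omega)
        (hadj m hm (by omega))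
      have hd := hdeg (m + 1) (by omega) hml
      have hpos : (0 : ℝ) < (k : ℝ) - (G.degree (x (m + 1)) : ℝ) := by
        have : (G.degree (x (m + 1)) : ℝ) < k := by exact_mod_cast hd
        linarith
      have h3 := (Nat.cast_le (α := ℝ)).2 h2
      rw [Nat.cast_mul, Nat.cast_sub hd.le] at h3
      rw [Finset.prod_Icc_succ_top (by omega), mul_right_comm, mul_one_div, le_div_iff₀ hpos]
      exact h3.trans h1
  exact key l hl le_rfl
end

section
/- For every fixed ε > 0 there exists d₀(ε) such that for every real d > d₀(ε), every integer k ≥ (2+ε)d, and all sufficiently large n: ∑_{j=0}^{k−1} (1/(k−j)) · C(n,j) (d/n)^j (1 − d/n)^{n−j} + ∑_{j=k}^{n} C(n,j) (d/n)^j (1 − d/n)^{n−j} ≤ 1/((1+ε/4)d). Equivalently, if B is a binomial random variable with parameters n and d/n, then E[ 1/(k−B) · 1_{B < k} ] + Pr[B ≥ k] ≤ 1/((1+ε/4)d). -/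
lemma stmt12_main (ε d c : ℝ) (hε : 0 < ε) (hd : 0 < d) (k : ℕ) (hk : (2 + ε) * d ≤ (k : ℝ))
    (hc : c = (1 + ε / 2) * Real.log (1 + ε / 2) - ε / 2) (n : ℕ) (hkn : k ≤ n) (hdn : d ≤ n) :
        (∑ j ∈ Finset.range k, (1 / ((k : ℝ) - (j : ℝ))) * (n.choose j : ℝ) *
            (d / n) ^ j * (1 - d / n) ^ (n - j)) +
          (∑ j ∈ Finset.Icc k n, (n.choose j : ℝ) * (d / n) ^ j * (1 - d / n) ^ (n - j))
        ≤ 1 / ((1 + ε / 2) * d) + Real.exp (-(c * d)) := by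
  have hn : (0 : ℝ) < n := lt_of_lt_of_le hd hdn
  set p : ℝ := d / n with hp
  have hp0 : 0 ≤ p := by positivity
  have hp1 : 0 ≤ 1 - p := by
    have : p ≤ 1 := (div_le_one hn).2 hdn
    linarith
  set t := Real.log (1 + ε / 2) with ht
  have hx : (0 : ℝ) < 1 + ε / 2 := by positivity
  have ht0 : 0 < t := Real.log_pos (by linarith)
  have het : Real.exp t = 1 + ε / 2 := Real.exp_log hx
  set X := Real.exp (-(t * ((1 + ε / 2) * d))) with hX
  set A := 1 / ((1 + ε / 2) * d) with hA
  have hA0 : 0 ≤ A := by positivity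
  have hX0 : 0 < X := Real.exp_pos _
  set q : ℕ → ℝ := fun j => (n.choose j : ℝ) * p ^ j * (1 - p) ^ (n - j) with hq
  have hq0 : ∀ j, 0 ≤ q j := fun j => by simp only [hq]; positivity
  have key : ∀ j : ℕ, (1 + ε / 2) * d ≤ j → 1 ≤ A + X * (1 + ε / 2) ^ j := by
    intro j hj
    have : 1 ≤ X * (1 + ε / 2) ^ j := by
      rw [← het, hX, ← Real.exp_nat_mul, ← Real.exp_add]
      apply Real.one_le_exp
      nlinarith
    linarith
  have h1 : ∑ j ∈ Finset.range k, (1 / ((k : ℝ) - (j : ℝ))) * (n.choose j : ℝ) *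
            p ^ j * (1 - p) ^ (n - j) ≤
      ∑ j ∈ Finset.range k, (A + X * (1 + ε / 2) ^ j) * q j := by
    apply Finset.sum_le_sum
    intro j hj
    have hjk : (j : ℝ) + 1 ≤ k := by exact_mod_cast Finset.mem_range.1 hj
    have hg : 1 / ((k : ℝ) - j) ≤ A + X * (1 + ε / 2) ^ j := by
      by_cases h : (1 + ε / 2) * d ≤ (k : ℝ) - j
      · have h2 : 1 / ((k : ℝ) - j) ≤ A := one_div_le_one_div_of_le (by positivity) h
        have : 0 ≤ X * (1 + ε / 2) ^ j := by positivity
        linarith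
      · push Not at h
        refine le_trans ?_ (key j (by linarith))
        rw [div_le_one (by linarith)]
        linarith
    calc _ = (1 / ((k : ℝ) - j)) * q j := by simp only [hq]; ring
      _ ≤ _ := mul_le_mul_of_nonneg_right hg (hq0 j)
  have h2 : ∑ j ∈ Finset.Icc k n, (n.choose j : ℝ) * p ^ j * (1 - p) ^ (n - j) ≤
      ∑ j ∈ Finset.Ico k (n + 1), (A + X * (1 + ε / 2) ^ j) * q j := by
    have : Finset.Icc k n = Finset.Ico k (n + 1) := by ext; simp
    rw [this]
    apply Finset.sum_le_sum
    intro j hj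
    have hjk : (k : ℝ) ≤ j := by exact_mod_cast (Finset.mem_Ico.1 hj).1
    have := key j (by nlinarith)
    exact le_mul_of_one_le_left (hq0 j) this
  have h3 : ∑ j ∈ Finset.range (n + 1), (A + X * (1 + ε / 2) ^ j) * q j
      = A + X * ((1 + ε / 2) * p + (1 - p)) ^ n := by
    have e1 : ∑ j ∈ Finset.range (n + 1), q j = 1 := by
      have := add_pow p (1 - p) n
      rw [add_sub_cancel, one_pow] at this
      rw [this]
      exact Finset.sum_congr rfl fun j _ => by simp only [hq]; ring
    calc _ = A * ∑ j ∈ Finset.range (n + 1), q j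
          + X * ∑ j ∈ Finset.range (n + 1), (1 + ε / 2) ^ j * q j := by
          rw [Finset.mul_sum, Finset.mul_sum, ← Finset.sum_add_distrib]
          exact Finset.sum_congr rfl fun j _ => by ring
      _ = _ := by
          rw [e1, add_pow, mul_one]
          congr 2
          exact Finset.sum_congr rfl fun j _ => by simp only [hq, mul_pow]; ring
  have h4 : ((1 + ε / 2) * p + (1 - p)) ^ n ≤ Real.exp (ε / 2 * d) := by
    have e : ε / 2 * d = n * (ε / 2 * p) := by rw [hp]; field_simp
    rw [e, Real.exp_nat_mul]
    apply pow_le_pow_left₀ (by positivity)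
    have := Real.add_one_le_exp (ε / 2 * p)
    linarith
  have h5 : X * Real.exp (ε / 2 * d) = Real.exp (-(c * d)) := by
    rw [hX, ← Real.exp_add, hc]; ring_nf
  have h6 := Finset.sum_range_add_sum_Ico (fun j => (A + X * (1 + ε / 2) ^ j) * q j)
    (show k ≤ n + 1 by omega)
  have h7 := mul_le_mul_of_nonneg_left h4 hX0.le
  linarith

/-- for every `ε > 0` there is `d₀(ε)` such that for every `d > d₀(ε)`,
every integer `k ≥ (2+ε)d` and all large `n`:
`∑_{j=0}^{k−1} (1/(k−j))·C(n,j)(d/n)^j(1−d/n)^{n−j}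
  + ∑_{j=k}^{n} C(n,j)(d/n)^j(1−d/n)^{n−j} ≤ 1/((1+ε/4)d)`. -/
theorem stmt12 (ε : ℝ) (hε : 0 < ε) :
    ∃ d₀ : ℝ, ∀ d : ℝ, d₀ < d → ∀ k : ℕ, (2 + ε) * d ≤ (k : ℝ) →
      ∃ n₀ : ℕ, ∀ n : ℕ, n₀ ≤ n →
        (∑ j ∈ Finset.range k, (1 / ((k : ℝ) - (j : ℝ))) * (n.choose j : ℝ) *
            (d / n) ^ j * (1 - d / n) ^ (n - j)) +
          (∑ j ∈ Finset.Icc k n, (n.choose j : ℝ) * (d / n) ^ j * (1 - d / n) ^ (n - j))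
        ≤ 1 / ((1 + ε / 4) * d) := by
  obtain ⟨c, hc⟩ : ∃ c, c = (1 + ε / 2) * Real.log (1 + ε / 2) - ε / 2 := ⟨_, rfl⟩
  have hx : (0 : ℝ) < 1 + ε / 2 := by positivity
  have hc0 : 0 < c := by
    have h := Real.log_lt_sub_one_of_pos (inv_pos.2 hx)
      (by rw [Ne, inv_eq_one]; intro h; linarith)
    rw [Real.log_inv] at h
    have h2 := mul_lt_mul_of_pos_left h hx
    rw [mul_sub, mul_inv_cancel₀ hx.ne'] at h2
    rw [hc]; linarith
  obtain ⟨κ, hκ⟩ : ∃ κ, κ = 1 / (1 + ε / 4) - 1 / (1 + ε / 2) := ⟨_, rfl⟩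
  have hκ0 : 0 < κ := by
    rw [hκ, sub_pos]
    exact one_div_lt_one_div_of_lt (by positivity) (by linarith)
  refine ⟨2 / (c ^ 2 * κ), fun d hd k hk => ⟨max k ⌈d⌉₊, fun n hn => ?_⟩⟩
  have hd0 : 0 < d := lt_trans (by positivity) hd
  have hm := stmt12_main ε d c hε hd0 k hk hc n (le_trans (le_max_left _ _) hn)
    (Nat.ceil_le.1 (le_trans (le_max_right _ _) hn))
  refine hm.trans ?_
  have e : 1 / ((1 + ε / 4) * d) = 1 / ((1 + ε / 2) * d) + κ / d := by
    rw [hκ]; field_simp; ring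
  rw [e]
  have h1 : (c * d) ^ 2 / 2 ≤ Real.exp (c * d) := by
    have := Real.quadratic_le_exp_of_nonneg (mul_pos hc0 hd0).le
    have : 0 < c * d := by positivity
    linarith
  have h2 : 2 < d * (c ^ 2 * κ) := (div_lt_iff₀ (by positivity)).1 hd
  have h3 : Real.exp (-(c * d)) ≤ κ / d := by
    rw [Real.exp_neg, inv_le_comm₀ (Real.exp_pos _) (by positivity), inv_div]
    refine le_trans ?_ h1
    rw [div_le_iff₀ hκ0]
    nlinarith
  linarith
end

section
/- Suppose k ≥ 2 and the set of good k-colourings of G is nonempty, and let Z be chosen uniformly at random from the good k-colourings. Then for every colour c with Pr[Z(u) = c] > 0 and all colours q, q' ∈ Fin k \ {c}: Pr[Z(v) = q | Z(u) = c] = Pr[Z(v) = q' | Z(u) = c] = 1/(k−1). Moreover, if the set of bad k-colourings of G is nonempty and X is uniform over Ω, then Pr[X(v) = X(u) = c | X is bad] = 1/k for every colour c. -/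
theorem aux_fib {α : Type*} [Finite α] {k : ℕ} (S : Set α) (f : α → Fin k) (T : Finset (Fin k))
    (h : ∀ a ∈ S, f a ∈ T) (n : ℕ) (hn : ∀ t ∈ T, {a | a ∈ S ∧ f a = t}.ncard = n) :
    S.ncard = T.card * n := by
  classical
  haveI := Fintype.ofFinite α
  have h1 := Finset.card_eq_sum_card_fiberwise (s := S.toFinset) (f := f) (t := T)
    (by intro a ha; exact h a (by simpa using ha))
  rw [Set.ncard_eq_toFinset_card', h1, ← smul_eq_mul, ← Finset.sum_const]
  refine Finset.sum_congr rfl fun t ht => ?_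
  rw [← hn t ht, Set.ncard_eq_toFinset_card']
  congr 1
  ext a
  simp

theorem aux_perm {V : Type*} [Fintype V] {k : ℕ} (G : SimpleGraph V) (v u : V)
    (p : Equiv.Perm (Fin k)) (q c : Fin k) :
    {σ : V → Fin k | (∀ x y, G.Adj x y → σ x ≠ σ y) ∧ σ v = p q ∧ σ u = p c}.ncard =
    {σ : V → Fin k | (∀ x y, G.Adj x y → σ x ≠ σ y) ∧ σ v = q ∧ σ u = c}.ncard := by
  symm
  refine Set.ncard_congr (fun σ _ => p ∘ σ) ?_ ?_ ?_
  · rintro σ ⟨h1, h2, h3⟩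
    refine ⟨fun x y hxy h => h1 x y hxy (p.injective h), ?_, ?_⟩ <;> simp [h2, h3]
  · intro σ τ _ _ h
    exact p.injective.comp_left h
  · rintro σ ⟨h1, h2, h3⟩
    refine ⟨p.symm ∘ σ, ⟨fun x y hxy h => h1 x y hxy (p.symm.injective h), ?_, ?_⟩, ?_⟩
    · simp [h2]
    · simp [h3]
    · ext x; simp

/-- for `Z` uniform over the nonempty set of good `k`-colourings of `G`
(those proper colourings with `σ v ≠ σ u`), for every colour `c` with
`Pr[Z(u) = c] > 0` and all colours `q, q' ≠ c`,
`Pr[Z(v) = q | Z(u) = c] = Pr[Z(v) = q' | Z(u) = c] = 1/(k−1)`; moreover, if the set of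
bad colourings (`σ v = σ u`) is nonempty and `X` is uniform over `Ω`, then
`Pr[X(v) = X(u) = c | X is bad] = 1/k` for every colour `c`. Conditional probabilities
are expressed as ratios of cardinalities. -/
theorem stmt14 {V : Type*} [Fintype V] {k : ℕ} (hk : 2 ≤ k)
    (G : SimpleGraph V) (v u : V) (huv : u ≠ v) (hadj : ¬ G.Adj v u)
    (hgood : {σ : V → Fin k | (∀ x y, G.Adj x y → σ x ≠ σ y) ∧ σ v ≠ σ u}.Nonempty) :
    (∀ c : Fin k,
      {σ : V → Fin k | ((∀ x y, G.Adj x y → σ x ≠ σ y) ∧ σ v ≠ σ u) ∧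
        σ u = c}.Nonempty →
      ∀ q q' : Fin k, q ≠ c → q' ≠ c →
        (({σ : V → Fin k | ((∀ x y, G.Adj x y → σ x ≠ σ y) ∧ σ v ≠ σ u) ∧
            σ v = q ∧ σ u = c}).ncard : ℝ) /
          (({σ : V → Fin k | ((∀ x y, G.Adj x y → σ x ≠ σ y) ∧ σ v ≠ σ u) ∧
            σ u = c}).ncard : ℝ) = 1 / ((k : ℝ) - 1) ∧
        (({σ : V → Fin k | ((∀ x y, G.Adj x y → σ x ≠ σ y) ∧ σ v ≠ σ u) ∧
            σ v = q' ∧ σ u = c}).ncard : ℝ) /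
          (({σ : V → Fin k | ((∀ x y, G.Adj x y → σ x ≠ σ y) ∧ σ v ≠ σ u) ∧
            σ u = c}).ncard : ℝ) = 1 / ((k : ℝ) - 1)) ∧
    ({σ : V → Fin k | (∀ x y, G.Adj x y → σ x ≠ σ y) ∧ σ v = σ u}.Nonempty →
      ∀ c : Fin k,
        (({σ : V → Fin k | (∀ x y, G.Adj x y → σ x ≠ σ y) ∧ σ v = c ∧
            σ u = c}).ncard : ℝ) /
          (({σ : V → Fin k | (∀ x y, G.Adj x y → σ x ≠ σ y) ∧
            σ v = σ u}).ncard : ℝ) = 1 / (k : ℝ)) := by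
  classical
  constructor
  · intro c hne
    have key : ∀ q : Fin k, q ≠ c →
        (({σ : V → Fin k | ((∀ x y, G.Adj x y → σ x ≠ σ y) ∧ σ v ≠ σ u) ∧
            σ v = q ∧ σ u = c}).ncard : ℝ) /
          (({σ : V → Fin k | ((∀ x y, G.Adj x y → σ x ≠ σ y) ∧ σ v ≠ σ u) ∧
            σ u = c}).ncard : ℝ) = 1 / ((k : ℝ) - 1) := by
      intro q hq
      have e : ∀ t : Fin k, t ≠ c → {σ : V → Fin k | ((∀ x y, G.Adj x y → σ x ≠ σ y) ∧
          σ v ≠ σ u) ∧ σ v = t ∧ σ u = c} =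
          {σ : V → Fin k | (∀ x y, G.Adj x y → σ x ≠ σ y) ∧ σ v = t ∧ σ u = c} := by
        intro t ht
        ext σ
        constructor
        · rintro ⟨⟨h1, _⟩, h2⟩
          exact ⟨h1, h2⟩
        · rintro ⟨h1, h2, h3⟩
          exact ⟨⟨h1, by rw [h2, h3]; exact ht⟩, h2, h3⟩
      have hc := aux_fib {σ : V → Fin k | ((∀ x y, G.Adj x y → σ x ≠ σ y) ∧ σ v ≠ σ u) ∧
            σ u = c} (fun σ => σ v) (Finset.univ.erase c)
        (by rintro σ ⟨⟨_, h2⟩, h3⟩; simp; rw [← h3]; exact h2)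
        ({σ : V → Fin k | (∀ x y, G.Adj x y → σ x ≠ σ y) ∧ σ v = q ∧ σ u = c}.ncard)
        (by
          intro t ht
          have ht : t ≠ c := by simpa using ht
          rw [← aux_perm G v u (Equiv.swap q t) q c, Equiv.swap_apply_left,
            Equiv.swap_apply_of_ne_of_ne hq.symm ht.symm, ← e t ht]
          congr 1
          ext σ
          simp only [Set.mem_setOf_eq]
          tauto)
      have hpos := (Set.ncard_pos (Set.toFinite _)).2 hne
      rw [e q hq]
      rw [hc] at hpos ⊢
      have hn := Nat.pos_of_mul_pos_left hpos
      rw [Finset.card_erase_of_mem (Finset.mem_univ _), Finset.card_univ, Fintype.card_fin]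
      push_cast [Nat.cast_sub (show 1 ≤ k by omega)]
      have h2 : (2 : ℝ) ≤ k := by exact_mod_cast hk
      have h3 : (k : ℝ) - 1 ≠ 0 := by linarith
      field_simp
    intro q q' hq hq'
    exact ⟨key q hq, key q' hq'⟩
  · intro hne c
    have hc := aux_fib {σ : V → Fin k | (∀ x y, G.Adj x y → σ x ≠ σ y) ∧ σ v = σ u}
        (fun σ => σ u) Finset.univ (fun _ _ => Finset.mem_univ _)
        ({σ : V → Fin k | (∀ x y, G.Adj x y → σ x ≠ σ y) ∧ σ v = c ∧ σ u = c}.ncard)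
        (by
          intro t _
          rw [← aux_perm G v u (Equiv.swap c t) c c, Equiv.swap_apply_left]
          congr 1
          ext σ
          simp only [Set.mem_setOf_eq]
          constructor
          · rintro ⟨⟨h1, h2⟩, h3⟩
            exact ⟨h1, h2.trans h3, h3⟩
          · rintro ⟨h1, h2, h3⟩
            exact ⟨⟨h1, h2.trans h3.symm⟩, h3⟩)
    have hpos := (Set.ncard_pos (Set.toFinite _)).2 hne
    rw [hc] at hpos ⊢
    have hn := Nat.pos_of_mul_pos_left hpos
    rw [Finset.card_univ, Fintype.card_fin]
    push_cast
    have h2 : (2 : ℝ) ≤ k := by exact_mod_cast hk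
    field_simp
end
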